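/- (Hartogs-type extension; local form of Proposition 5.2 of the paper.) Let J be an almost complex structure on an open set U ⊆ ℂ², let p ∈ U, and let α be a closed J-anti-invariant 2-form on U ∖ {p}. Then α extends smoothly across p: there exists a closed J-anti-invariant 2-form α̃ on all of U with α̃(x) = α(x) for every x ∈ U ∖ {p}. -/

import Mathlib

open Complex Metric

/-- An almost complex structure on an open set `U ⊆ ℂ²`. -/
def IsAlmostComplexOn (J : ℂ × ℂ → (ℂ × ℂ →L[ℝ] ℂ × ℂ)) (U : Set (ℂ × ℂ)) : Prop :=
  ContDiffOn ℝ (⊤ : ℕ∞) J U ∧ ∀ x ∈ U, ∀ X : ℂ × ℂ, J x (J x X) = -X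

/-- The open unit disk in `ℂ`. -/
def unitDisk : Set ℂ := ball (0 : ℂ) 1

/-- An embedded `J`-holomorphic disk in `U`. -/
def IsEmbeddedJHolDisk (J : ℂ × ℂ → (ℂ × ℂ →L[ℝ] ℂ × ℂ)) (U : Set (ℂ × ℂ))
    (u : ℂ → ℂ × ℂ) : Prop :=
  ContDiffOn ℝ (⊤ : ℕ∞) u unitDisk ∧ Set.InjOn u unitDisk ∧
    Set.MapsTo u unitDisk U ∧
    (∀ z ∈ unitDisk, Function.Injective (fderiv ℝ u z)) ∧
    ∀ z ∈ unitDisk, ∀ v : ℂ, fderiv ℝ u z (Complex.I * v) = J (u z) (fderiv ℝ u z v)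

/-- A (smooth, alternating) 2-form on an open set `U ⊆ ℂ²`. -/
def IsTwoFormOn (α : ℂ × ℂ → (ℂ × ℂ →L[ℝ] ℂ × ℂ →L[ℝ] ℝ)) (U : Set (ℂ × ℂ)) : Prop :=
  ContDiffOn ℝ (⊤ : ℕ∞) α U ∧ ∀ x ∈ U, ∀ X : ℂ × ℂ, α x X X = 0

/-- `J`-anti-invariance of a 2-form on `U`. -/
def IsJAntiInvariantOn (J : ℂ × ℂ → (ℂ × ℂ →L[ℝ] ℂ × ℂ))
    (α : ℂ × ℂ → (ℂ × ℂ →L[ℝ] ℂ × ℂ →L[ℝ] ℝ)) (U : Set (ℂ × ℂ)) : Prop :=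
  ∀ x ∈ U, ∀ X Y : ℂ × ℂ, α x (J x X) (J x Y) = -α x X Y

/-- Closedness of a 2-form on `U`. -/
def IsClosedTwoFormOn (α : ℂ × ℂ → (ℂ × ℂ →L[ℝ] ℂ × ℂ →L[ℝ] ℝ))
    (U : Set (ℂ × ℂ)) : Prop :=
  ∀ x ∈ U, ∀ X Y Z : ℂ × ℂ,
    fderiv ℝ α x X Y Z - fderiv ℝ α x Y X Z + fderiv ℝ α x Z X Y = 0

open Complex Metric
set_option linter.unusedSectionVars false

namespace HartogsAux
open MeasureTheory Filter Topology
open scoped ContDiff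

section Kernel

variable {W : Type} [NormedAddCommGroup W] [NormedSpace ℝ W] [NormedSpace ℂ W]
  [IsScalarTower ℝ ℂ W]

/-- Smooth kernels supported in the closed ball of radius three. -/
def Ker (k : ℂ → ℂ) : Prop := ContDiff ℝ ∞ k ∧ ∀ ζ, 3 < ‖ζ‖ → k ζ = 0

/-- The rescaled convolution of `g` with the kernel `k` at scale `s`. -/
noncomputable def Lam (k : ℂ → ℂ) (s : ℝ) (g : ℂ → W) (z : ℂ) : W :=
  ∫ ζ, k ζ • g (z - s • ζ)

/-- The `L¹` norm of a kernel. -/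
noncomputable def N1 (k : ℂ → ℂ) : ℝ := ∫ ζ, ‖k ζ‖

/-- The directional derivative of a kernel. -/
noncomputable def dk (k : ℂ → ℂ) (v : ℂ) (ζ : ℂ) : ℂ := fderiv ℝ k ζ v

/-- Bounded Hölder functions of exponent one half. -/
def HB {X : Type*} [NormedAddCommGroup X] (g : ℂ → X) (M : ℝ) : Prop :=
  (∀ z, ‖g z‖ ≤ M) ∧ ∀ z z', ‖g z - g z'‖ ≤ M * √‖z - z'‖

lemma HB.continuous {X : Type*} [NormedAddCommGroup X] {g : ℂ → X} {M : ℝ} (h : HB g M) :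
    Continuous g := by
  rw [continuous_iff_continuousAt]
  intro z
  rw [ContinuousAt, tendsto_iff_norm_sub_tendsto_zero]
  have h2 : Tendsto (fun z' : ℂ => M * √‖z' - z‖) (𝓝 z) (𝓝 0) := by
    have : Continuous (fun z' : ℂ => M * √‖z' - z‖) := by fun_prop
    have h3 := this.tendsto z
    simpa using h3
  exact squeeze_zero (fun _ => norm_nonneg _) (fun z' => h.2 z' z) h2

lemma Ker.hcs {k : ℂ → ℂ} (hk : Ker k) : HasCompactSupport k := by
  apply HasCompactSupport.intro (isCompact_closedBall (0 : ℂ) 3)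
  intro x hx
  apply hk.2
  simpa using hx

lemma Ker.cont {k : ℂ → ℂ} (hk : Ker k) : Continuous k := hk.1.continuous

lemma Ker.integrable {k : ℂ → ℂ} (hk : Ker k) : Integrable k :=
  hk.cont.integrable_of_hasCompactSupport hk.hcs

lemma N1_nonneg (k : ℂ → ℂ) : 0 ≤ N1 k := integral_nonneg fun _ => norm_nonneg _

lemma Ker.dk {k : ℂ → ℂ} (hk : Ker k) (v : ℂ) : Ker (dk k v) := by
  refine ⟨?_, ?_⟩
  · unfold HartogsAux.dk
    have := hk.1.fderiv_right (m := ∞) (by simp)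
    fun_prop
  · intro ζ hζ
    have : k =ᶠ[𝓝 ζ] fun _ => 0 := by
      have : ∀ᶠ x in 𝓝 ζ, 3 < ‖x‖ := continuous_norm.continuousAt.eventually (lt_mem_nhds hζ)
      filter_upwards [this] with x hx using hk.2 x hx
    simp [HartogsAux.dk, this.fderiv_eq]

lemma lam_integrable {k : ℂ → ℂ} (hk : Ker k) (s : ℝ) {g : ℂ → W} (hg : Continuous g) (z : ℂ) :
    Integrable (fun ζ => k ζ • g (z - s • ζ)) := by
  have := hk.cont
  apply Continuous.integrable_of_hasCompactSupport
  · fun_prop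
  · exact hk.hcs.smul_right

lemma lam_bound {k : ℂ → ℂ} (hk : Ker k) (s : ℝ) {g : ℂ → W} {M : ℝ} (hM : ∀ z, ‖g z‖ ≤ M)
    (z : ℂ) : ‖Lam k s g z‖ ≤ N1 k * M := by
  unfold Lam N1
  rw [← integral_mul_const]
  apply norm_integral_le_of_norm_le
  · exact hk.integrable.norm.mul_const M
  · filter_upwards with ζ
    rw [norm_smul]
    gcongr
    exact hM _

lemma lam_bound_hb [CompleteSpace W] {k : ℂ → ℂ} (hk : Ker k) (hk0 : ∫ ζ, k ζ = 0) {r : ℝ}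
    (hr : 0 ≤ r)
    {g : ℂ → W} {M : ℝ} (hM : HB g M) (z : ℂ) : ‖Lam k (r ^ 2) g z‖ ≤ N1 k * (2 * r * M) := by
  have hM0 : 0 ≤ M := (norm_nonneg _).trans (hM.1 0)
  have h1 : Lam k (r ^ 2) g z = ∫ ζ, k ζ • (g (z - r ^ 2 • ζ) - g z) := by
    have : ∀ ζ, k ζ • (g (z - r ^ 2 • ζ) - g z) = k ζ • g (z - r ^ 2 • ζ) - k ζ • g z :=
      fun ζ => smul_sub _ _ _
    simp_rw [this]
    rw [integral_sub (lam_integrable hk _ hM.continuous z) (hk.integrable.smul_const _),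
      integral_smul_const, hk0]
    simp [Lam]
  rw [h1]
  unfold N1
  rw [← integral_mul_const]
  apply norm_integral_le_of_norm_le
  · exact hk.integrable.norm.mul_const _
  · filter_upwards with ζ
    rw [norm_smul]
    by_cases hζ : 3 < ‖ζ‖
    · simp [hk.2 ζ hζ]
    · push Not at hζ
      gcongr
      refine (hM.2 _ _).trans ?_
      have : ‖z - r ^ 2 • ζ - z‖ = r ^ 2 * ‖ζ‖ := by
        rw [sub_sub_cancel_left, norm_neg, norm_smul]; simp
      rw [this, Real.sqrt_mul (by positivity), Real.sqrt_sq hr]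
      have h2 : √‖ζ‖ ≤ 2 := by
        rw [Real.sqrt_le_left (by norm_num)]; linarith
      calc M * (r * √‖ζ‖) ≤ M * (r * 2) := by gcongr
        _ = _ := by ring

lemma lam_sub {k : ℂ → ℂ} (hk : Ker k) (s : ℝ) {g g' : ℂ → W} (hg : Continuous g)
    (hg' : Continuous g') (z : ℂ) :
    Lam k s (g - g') z = Lam k s g z - Lam k s g' z := by
  unfold Lam
  rw [← integral_sub (lam_integrable hk s hg z) (lam_integrable hk s hg' z)]
  simp [smul_sub]

/-- change of variables to a genuine convolution -/
lemma lam_eq_conv (k : ℂ → ℂ) {s : ℝ} (hs : 0 < s) (g : ℂ → W) (z : ℂ) :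
    Lam k s g z = (s ^ 2)⁻¹ •
      (convolution (fun t => k (s⁻¹ • t)) g (ContinuousLinearMap.lsmul ℝ ℂ) volume) z := by
  have := Measure.integral_comp_smul (volume : Measure ℂ)
    (fun t => k (s⁻¹ • t) • g (z - t)) s
  simp only [Complex.finrank_real_complex] at this
  rw [abs_of_pos (by positivity)] at this
  rw [convolution_def]
  simp only [ContinuousLinearMap.lsmul_apply]
  rw [← this]
  unfold Lam
  congr 1
  ext ζ
  rw [smul_smul, inv_mul_cancel₀ hs.ne', one_smul]

lemma ker_scale_hcs {k : ℂ → ℂ} (hk : Ker k) {s : ℝ} (hs : 0 < s) :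
    HasCompactSupport (fun t => k (s⁻¹ • t)) := by
  have := hk.hcs.comp_homeomorph (Homeomorph.smulOfNeZero (s⁻¹) (inv_ne_zero hs.ne'))
  exact this

lemma fderiv_scale {k : ℂ → ℂ} (hk : Ker k) (s : ℝ) (t v : ℂ) :
    fderiv ℝ (fun t => k (s⁻¹ • t)) t v = s⁻¹ • dk k v (s⁻¹ • t) := by
  have h1 : HasFDerivAt k (fderiv ℝ k (s⁻¹ • t)) (s⁻¹ • t) :=
    ((hk.1.differentiable (by simp)) _).hasFDerivAt
  have h2 : HasFDerivAt (fun t : ℂ => s⁻¹ • t) (s⁻¹ • ContinuousLinearMap.id ℝ ℂ) t :=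
    (hasFDerivAt_id t).const_smul s⁻¹
  have h3 := h1.comp t h2
  have h4 : fderiv ℝ (fun t => k (s⁻¹ • t)) t = _ := h3.fderiv
  rw [h4]
  simp [dk]

lemma lam_hasFDerivAt {k : ℂ → ℂ} (hk : Ker k) {s : ℝ} (hs : 0 < s) {g : ℂ → W}
    (hg : Continuous g) (z : ℂ) :
    ∃ D : ℂ →L[ℝ] W, HasFDerivAt (Lam k s g) D z ∧ ∀ v, D v = s⁻¹ • Lam (dk k v) s g z := by
  have hcs := ker_scale_hcs hk hs
  have hc1 : ContDiff ℝ 1 (fun t => k (s⁻¹ • t)) := by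
    have := hk.1.of_le (m := 1) (by simp)
    fun_prop
  have h := hcs.hasFDerivAt_convolution_left (ContinuousLinearMap.lsmul ℝ ℂ) (μ := volume) hc1
    hg.locallyIntegrable z
  refine ⟨_, (h.const_smul ((s ^ 2)⁻¹)).congr_of_eventuallyEq
    (Eventually.of_forall fun z => lam_eq_conv k hs g z), ?_⟩
  intro v
  rw [lam_eq_conv _ hs, _root_.smul_apply, smul_comm]
  congr 1
  rw [convolution_def, convolution_def, ← integral_smul]
  have hint : Integrable (fun t => (((ContinuousLinearMap.lsmul ℝ ℂ : ℂ →L[ℝ] W →L[ℝ] W).precompL ℂ)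
      (fderiv ℝ (fun t => k (s⁻¹ • t)) t)) (g (z - t))) := by
    apply Continuous.integrable_of_hasCompactSupport
    · have := hc1.continuous_fderiv (by simp)
      fun_prop
    · have h5 := hcs.fderiv (𝕜 := ℝ)
      apply h5.mono
      intro t ht
      contrapose! ht
      simp only [Function.mem_support, not_not] at ht ⊢
      rw [ht]; simp
  rw [ContinuousLinearMap.integral_apply hint]
  congr 1
  ext t
  simp only [ContinuousLinearMap.precompL_apply, ContinuousLinearMap.lsmul_apply]
  rw [fderiv_scale hk, smul_assoc]

/-- Derivative falling on a `C¹` compactly supported function. -/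
lemma lam_hasFDerivAt' [CompleteSpace W] {k : ℂ → ℂ} (hk : Ker k) {s : ℝ} (hs : 0 < s) {g : ℂ → W}
    (hg : ContDiff ℝ 1 g) (hgc : HasCompactSupport g) (z : ℂ) :
    ∃ D : ℂ →L[ℝ] W, HasFDerivAt (Lam k s g) D z ∧
      ∀ v, D v = Lam k s (fun z => fderiv ℝ g z v) z := by
  have hcs := ker_scale_hcs hk hs
  have hc1 : Continuous (fun t => k (s⁻¹ • t)) := by
    have := hk.cont
    fun_prop
  have h := hgc.hasFDerivAt_convolution_right (ContinuousLinearMap.lsmul ℝ ℂ) (μ := volume)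
    hc1.locallyIntegrable hg z
  refine ⟨_, (h.const_smul ((s ^ 2)⁻¹)).congr_of_eventuallyEq
    (Eventually.of_forall fun z => lam_eq_conv k hs g z), ?_⟩
  intro v
  rw [lam_eq_conv _ hs, _root_.smul_apply]
  congr 1
  rw [convolution_precompR_apply _ hc1.locallyIntegrable (hgc.fderiv (𝕜 := ℝ))
    (hg.continuous_fderiv (by simp))]

lemma dk_mean_zero {k : ℂ → ℂ} (hk : Ker k) (v : ℂ) : ∫ ζ, dk k v ζ = 0 := by
  obtain ⟨D, hD, hDv⟩ := lam_hasFDerivAt hk one_pos (g := fun _ => (1 : ℂ)) continuous_const 0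
  have h2 : HasFDerivAt (Lam k 1 (fun _ => (1 : ℂ))) (0 : ℂ →L[ℝ] ℂ) 0 := by
    have : Lam k 1 (fun _ => (1 : ℂ)) = fun _ => Lam k 1 (fun _ => (1 : ℂ)) 0 := by
      ext; simp [Lam]
    rw [this]
    exact hasFDerivAt_const _ _
  have h3 := hDv v
  rw [hD.unique h2] at h3
  simpa [Lam] using h3.symm

end Kernel
end HartogsAux

open Complex Metric
set_option linter.unusedSectionVars false

namespace HartogsAux
open MeasureTheory Filter Topology
open scoped ContDiff

section Sums

variable {W : Type} [NormedAddCommGroup W] [NormedSpace ℝ W] [NormedSpace ℂ W]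
  [IsScalarTower ℝ ℂ W]

lemma clm_norm_le (D : ℂ →L[ℝ] W) : ‖D‖ ≤ ‖D 1‖ + ‖D I‖ := by
  apply ContinuousLinearMap.opNorm_le_bound _ (by positivity)
  intro v
  have : D v = v.re • D 1 + v.im • D I := by
    rw [← map_smul, ← map_smul, ← map_add]
    congr 1
    apply Complex.ext <;> simp
  rw [this]
  calc ‖v.re • D 1 + v.im • D I‖ ≤ |v.re| * ‖D 1‖ + |v.im| * ‖D I‖ := by
        refine (norm_add_le _ _).trans ?_
        simp [norm_smul]
    _ ≤ ‖v‖ * ‖D 1‖ + ‖v‖ * ‖D I‖ := by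
        gcongr
        · exact abs_re_le_norm v
        · exact abs_im_le_norm v
    _ = _ := by ring

lemma summable_half (A : ℝ) : Summable (fun j : ℕ => A * (1 / 2 : ℝ) ^ j) :=
  summable_geometric_two.mul_left A

lemma sum_min [CompleteSpace W] {a : ℕ → W} {A d : ℝ} (hA : 0 ≤ A) (hd : 0 ≤ d)
    (h1 : ∀ j, ‖a j‖ ≤ A * (1 / 2) ^ j) (h2 : ∀ j, ‖a j‖ ≤ A * 2 ^ j * d) :
    ‖∑' j, a j‖ ≤ 4 * A * √d := by
  have hs : Summable a := Summable.of_norm_bounded (summable_half A) h1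
  rcases hd.eq_or_lt with hd0 | hd0
  · have : ∀ j, a j = 0 := fun j => by
      have := h2 j
      rw [← hd0, mul_zero] at this
      exact norm_le_zero_iff.1 this
    simp [this, ← hd0]
  have htot : ∀ n : ℕ, ‖∑' j, a (j + n)‖ ≤ 2 * A * (1 / 2) ^ n := by
    intro n
    refine tsum_of_norm_bounded (g := fun j : ℕ => A * (1 / 2 : ℝ) ^ (j + n)) ?_ (fun j => h1 _)
    have := (hasSum_geometric_two).mul_left (A * (1 / 2) ^ n)
    have e1 : (fun j : ℕ => A * (1 / 2 : ℝ) ^ (j + n)) =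
        fun j : ℕ => A * (1 / 2) ^ n * (1 / 2 : ℝ) ^ j := by
      ext j; rw [pow_add]; ring
    have e2 : 2 * A * (1 / 2) ^ n = A * (1 / 2) ^ n * 2 := by ring
    rw [e1, e2]
    exact this
  rcases le_or_gt d 1 with hd1 | hd1
  · obtain ⟨n, hn1, hn2⟩ := exists_nat_pow_near_of_lt_one hd0 hd1 (y := (1 / 4 : ℝ)) (by norm_num)
      (by norm_num)
    have hq : ∀ n : ℕ, (1 / 4 : ℝ) ^ n = ((1 / 2) ^ n) ^ 2 := fun n => by
      rw [← pow_mul, mul_comm, pow_mul]; norm_num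
    set r : ℝ := (1 / 2) ^ n with hr
    have hr0 : 0 < r := by positivity
    have hu : √d ≤ r := by
      rw [Real.sqrt_le_left hr0.le, ← hq]; exact hn2
    have hl : r / 2 ≤ √d := by
      apply Real.le_sqrt_of_sq_le
      have : (r / 2) ^ 2 = (1 / 4 : ℝ) ^ (n + 1) := by rw [hq, hr]; ring
      rw [this]; exact hn1.le
    rw [← hs.sum_add_tsum_nat_add (n + 1)]
    have hA1 : ‖∑ i ∈ Finset.range (n + 1), a i‖ ≤ 2 * A * √d := by
      calc ‖∑ i ∈ Finset.range (n + 1), a i‖ ≤ ∑ i ∈ Finset.range (n + 1), A * 2 ^ i * d :=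
            norm_sum_le_of_le _ fun i _ => h2 i
        _ = A * d * ∑ i ∈ Finset.range (n + 1), (2 : ℝ) ^ i := by
            rw [Finset.mul_sum]; congr 1; ext; ring
        _ ≤ A * d * 2 ^ (n + 1) := by
            gcongr
            rw [geom_sum_eq (by norm_num)]
            norm_num
        _ = 2 * A * (√d * √d) * r⁻¹ := by
            rw [Real.mul_self_sqrt hd, hr]
            simp only [one_div, inv_pow, inv_inv]
            ring
        _ ≤ 2 * A * (√d * r) * r⁻¹ := by gcongr
        _ = 2 * A * √d := by field_simp
    have hA2 := htot (n + 1)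
    have hA3 : 2 * A * (1 / 2) ^ (n + 1) ≤ 2 * A * √d := by
      gcongr
      rw [pow_succ]; linarith
    calc _ ≤ _ := norm_add_le _ _
      _ ≤ 2 * A * √d + 2 * A * √d := by linarith
      _ = _ := by ring
  · have := htot 0
    simp only [add_zero, pow_zero, mul_one] at this
    have h3 : 1 ≤ √d := by
      rw [Real.one_le_sqrt]; exact hd1.le
    calc _ ≤ 2 * A := this
      _ ≤ 4 * A * 1 := by linarith
      _ ≤ _ := by gcongr

/-- the scale -/
noncomputable def sc (j : ℕ) : ℝ := ((1 / 2 : ℝ) ^ j) ^ 2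

lemma sc_pos (j : ℕ) : 0 < sc j := by unfold sc; positivity

lemma sc_le (j : ℕ) : sc j ≤ (1 / 2) ^ j := by
  unfold sc
  have : (1 / 2 : ℝ) ^ j ≤ 1 := pow_le_one₀ (by norm_num) (by norm_num)
  have h0 : 0 < (1 / 2 : ℝ) ^ j := by positivity
  nlinarith

/-- Singular integral operator. -/
noncomputable def Sk (k : ℂ → ℂ) (g : ℂ → W) (z : ℂ) : W := ∑' j, Lam k (sc j) g z

/-- Smoothing operator. -/
noncomputable def Tk (k : ℂ → ℂ) (g : ℂ → W) (z : ℂ) : W := ∑' j, sc j • Lam k (sc j) g z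

variable [CompleteSpace W]

lemma sk_term_bound {k : ℂ → ℂ} (hk : Ker k) (hk0 : ∫ ζ, k ζ = 0) {g : ℂ → W} {M : ℝ}
    (hg : HB g M) (z : ℂ) (j : ℕ) : ‖Lam k (sc j) g z‖ ≤ 2 * N1 k * M * (1 / 2) ^ j := by
  have := lam_bound_hb hk hk0 (r := (1 / 2) ^ j) (by positivity) hg z
  unfold sc
  linarith

lemma sk_summable {k : ℂ → ℂ} (hk : Ker k) (hk0 : ∫ ζ, k ζ = 0) {g : ℂ → W} {M : ℝ}
    (hg : HB g M) (z : ℂ) : Summable (fun j => Lam k (sc j) g z) :=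
  Summable.of_norm_bounded (summable_half _) (sk_term_bound hk hk0 hg z)

/-- The constant for the Hölder bound. -/
noncomputable def CK (k : ℂ → ℂ) : ℝ := 8 * (N1 k + N1 (dk k 1) + N1 (dk k I)) * 2

lemma CK_nonneg (k : ℂ → ℂ) : 0 ≤ CK k := by
  unfold CK
  have := N1_nonneg k
  have := N1_nonneg (dk k 1)
  have := N1_nonneg (dk k I)
  positivity

lemma sk_HB {k : ℂ → ℂ} (hk : Ker k) (hk0 : ∫ ζ, k ζ = 0) {g : ℂ → W} {M : ℝ}
    (hg : HB g M) : HB (Sk k g) (CK k * M) := by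
  have hM0 : 0 ≤ M := (norm_nonneg _).trans (hg.1 0)
  have hn0 := N1_nonneg k
  have hn1 := N1_nonneg (dk k 1)
  have hn2 := N1_nonneg (dk k I)
  constructor
  · intro z
    have h1 : ‖Sk k g z‖ ≤ 2 * N1 k * M * 2 :=
      tsum_of_norm_bounded (hasSum_geometric_two.mul_left _) (sk_term_bound hk hk0 hg z)
    unfold CK
    nlinarith [mul_nonneg hn0 hM0, mul_nonneg hn1 hM0, mul_nonneg hn2 hM0]
  · intro z z'
    have h1 := sk_summable hk hk0 hg z
    have h2 := sk_summable hk hk0 hg z'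
    unfold Sk
    rw [← h1.tsum_sub h2]
    have hA : CK k * M = 4 * (4 * (N1 k + N1 (dk k 1) + N1 (dk k I)) * M) := by unfold CK; ring
    rw [hA]
    apply sum_min (by positivity) (norm_nonneg _)
    · intro j
      have e1 := sk_term_bound hk hk0 hg z j
      have e2 := sk_term_bound hk hk0 hg z' j
      have e3 : (0 : ℝ) ≤ (1 / 2) ^ j := by positivity
      calc _ ≤ _ := norm_sub_le _ _
        _ ≤ 4 * N1 k * M * (1 / 2) ^ j := by linarith
        _ ≤ _ := by
          gcongr
          linarith
    · intro j
      have hD := fun z => lam_hasFDerivAt hk (sc_pos j) hg.continuous z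
      choose D hD hDv using hD
      have hb : ∀ z, ‖D z‖ ≤ 4 * (N1 k + N1 (dk k 1) + N1 (dk k I)) * M * 2 ^ j := by
        intro z
        refine (clm_norm_le _).trans ?_
        have key : ∀ v, ‖D z v‖ ≤ 2 * N1 (dk k v) * M * 2 ^ j := by
          intro v
          rw [hDv, norm_smul]
          have e1 := sk_term_bound (hk.dk v) (dk_mean_zero hk v) hg z j
          have e2 : ‖(sc j)⁻¹‖ = 2 ^ j * 2 ^ j := by
            rw [norm_inv, Real.norm_of_nonneg (sc_pos j).le]
            unfold sc
            simp only [one_div, inv_pow, inv_inv]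
            ring
          rw [e2]
          calc (2 : ℝ) ^ j * 2 ^ j * ‖Lam (dk k v) (sc j) g z‖
              ≤ 2 ^ j * 2 ^ j * (2 * N1 (dk k v) * M * (1 / 2) ^ j) := by gcongr
            _ = 2 * N1 (dk k v) * M * 2 ^ j := by
              rw [one_div, inv_pow]; field_simp
        have e1 := key 1
        have e2 := key I
        have e3 : (0 : ℝ) < 2 ^ j := by positivity
        calc _ ≤ 2 * N1 (dk k 1) * M * 2 ^ j + 2 * N1 (dk k I) * M * 2 ^ j := add_le_add e1 e2
          _ = (2 * N1 (dk k 1) + 2 * N1 (dk k I)) * M * 2 ^ j := by ring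
          _ ≤ _ := by
            gcongr
            linarith
      exact convex_univ.norm_image_sub_le_of_norm_hasFDerivWithin_le
        (fun z _ => (hD z).hasFDerivWithinAt) (fun z _ => hb z) (Set.mem_univ z') (Set.mem_univ z)

lemma tk_term_bound {k : ℂ → ℂ} (hk : Ker k) {g : ℂ → W} {M : ℝ}
    (hg : ∀ z, ‖g z‖ ≤ M) (z : ℂ) (j : ℕ) :
    ‖sc j • Lam k (sc j) g z‖ ≤ N1 k * M * (1 / 2) ^ j := by
  have hM0 : 0 ≤ M := (norm_nonneg _).trans (hg 0)
  have hn0 := N1_nonneg k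
  rw [norm_smul, Real.norm_of_nonneg (sc_pos j).le]
  calc sc j * ‖Lam k (sc j) g z‖ ≤ (1 / 2) ^ j * (N1 k * M) := by
        gcongr
        · exact sc_le j
        · exact lam_bound hk _ hg z
    _ = _ := by ring

lemma tk_bound {k : ℂ → ℂ} (hk : Ker k) {g : ℂ → W} {M : ℝ}
    (hg : ∀ z, ‖g z‖ ≤ M) (z : ℂ) : ‖Tk k g z‖ ≤ 2 * N1 k * M := by
  have : ‖Tk k g z‖ ≤ N1 k * M * 2 :=
    tsum_of_norm_bounded (hasSum_geometric_two.mul_left _) (tk_term_bound hk hg z)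
  linarith

lemma tk_hasFDerivAt {k : ℂ → ℂ} (hk : Ker k) {g : ℂ → W} {M : ℝ} (hg : HB g M) (z : ℂ) :
    ∃ D : ℂ →L[ℝ] W, HasFDerivAt (Tk k g) D z ∧ ∀ v, D v = Sk (dk k v) g z := by
  have hD := fun j z => lam_hasFDerivAt hk (sc_pos j) hg.continuous z
  choose D hD hDv using hD
  have hb : ∀ j z, ‖sc j • D j z‖ ≤
      (2 * N1 (dk k 1) * M + 2 * N1 (dk k I) * M) * (1 / 2) ^ j := by
    intro j z
    refine (clm_norm_le _).trans ?_
    have key : ∀ v, ‖(sc j • D j z) v‖ ≤ 2 * N1 (dk k v) * M * (1 / 2) ^ j := by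
      intro v
      rw [_root_.smul_apply, hDv, smul_inv_smul₀ (sc_pos j).ne']
      exact sk_term_bound (hk.dk v) (dk_mean_zero hk v) hg z j
    have := key 1
    have := key I
    linarith
  have h := hasFDerivAt_tsum (𝕜 := ℝ) (f := fun j z => sc j • Lam k (sc j) g z)
    (f' := fun j z => sc j • D j z) (x₀ := 0) (summable_half _)
    (fun j z => (hD j z).const_smul (sc j)) hb
    (Summable.of_norm_bounded (summable_half _) (tk_term_bound hk hg.1 0)) z
  refine ⟨_, h, ?_⟩
  intro v
  have hs : Summable fun j => sc j • D j z :=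
    Summable.of_norm_bounded (summable_half _) (fun j => hb j z)
  have := (ContinuousLinearMap.apply ℝ W v).map_tsum hs
  simp only [ContinuousLinearMap.apply_apply] at this
  rw [this]
  unfold Sk
  congr 1
  ext j
  rw [_root_.smul_apply, hDv, smul_inv_smul₀ (sc_pos j).ne']

lemma sk_sub {k : ℂ → ℂ} (hk : Ker k) (hk0 : ∫ ζ, k ζ = 0) {g g' : ℂ → W} {M M' : ℝ}
    (hg : HB g M) (hg' : HB g' M') (z : ℂ) : Sk k (g - g') z = Sk k g z - Sk k g' z := by
  unfold Sk
  rw [← (sk_summable hk hk0 hg z).tsum_sub (sk_summable hk hk0 hg' z)]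
  congr 1
  ext j
  exact lam_sub hk _ hg.continuous hg'.continuous z

lemma tk_sub {k : ℂ → ℂ} (hk : Ker k) {g g' : ℂ → W} {M M' : ℝ}
    (hg : HB g M) (hg' : HB g' M') (z : ℂ) : Tk k (g - g') z = Tk k g z - Tk k g' z := by
  unfold Tk
  rw [← (Summable.of_norm_bounded (summable_half _) (tk_term_bound hk hg.1 z)).tsum_sub
    (Summable.of_norm_bounded (summable_half _) (tk_term_bound hk hg'.1 z))]
  congr 1
  ext j
  rw [lam_sub hk _ hg.continuous hg'.continuous z, smul_sub]

end Sums
end HartogsAux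

open Complex Metric
set_option linter.unusedSectionVars false

namespace HartogsAux
open MeasureTheory Filter Topology
open scoped ContDiff

section Specific

/-- radial profile of the cutoff -/
noncomputable def eta (t : ℝ) : ℝ := Real.smoothTransition (5 - t)

lemma eta_contDiff : ContDiff ℝ ∞ eta := by
  unfold eta
  exact Real.smoothTransition.contDiff.comp (contDiff_const.sub contDiff_id)

lemma eta_one {t : ℝ} (h : t ≤ 4) : eta t = 1 :=
  Real.smoothTransition.one_of_one_le (by linarith)

lemma eta_zero {t : ℝ} (h : 5 ≤ t) : eta t = 0 :=
  Real.smoothTransition.zero_of_nonpos (by linarith)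

lemma eta_deriv_zero {t : ℝ} (h : t < 4 ∨ 5 < t) : deriv eta t = 0 := by
  rcases h with h | h
  · have : eta =ᶠ[𝓝 t] fun _ => 1 := by
      filter_upwards [gt_mem_nhds h] with x hx using eta_one hx.le
    rw [this.deriv_eq]; simp
  · have : eta =ᶠ[𝓝 t] fun _ => 0 := by
      filter_upwards [lt_mem_nhds h] with x hx using eta_zero hx.le
    rw [this.deriv_eq]; simp

/-- radial profile of the kernel -/
noncomputable def kap (t : ℝ) : ℝ := (eta t - eta (16 * t)) / t

lemma kap_contDiff : ContDiff ℝ ∞ kap := by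
  rw [contDiff_iff_contDiffAt]
  intro t
  rcases lt_or_ge t (1 / 4) with h | h
  · have : kap =ᶠ[𝓝 t] fun _ => 0 := by
      filter_upwards [gt_mem_nhds h] with x hx
      unfold kap
      rw [eta_one (by linarith), eta_one (by linarith)]; simp
    exact contDiffAt_const.congr_of_eventuallyEq this
  · unfold kap
    have h1 := eta_contDiff
    apply ContDiffAt.div
    · exact (h1.sub (h1.comp (contDiff_const.mul contDiff_id))).contDiffAt
    · exact contDiffAt_id
    · linarith

lemma kap_mul (t : ℝ) : t * kap t = eta t - eta (16 * t) := by
  unfold kap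
  rcases eq_or_ne t 0 with rfl | h
  · simp
  · field_simp

lemma kap_deriv (t : ℝ) : kap t + t * deriv kap t = deriv eta t - 16 * deriv eta (16 * t) := by
  have h1 : HasDerivAt kap (deriv kap t) t :=
    ((kap_contDiff.differentiable (by simp)) t).hasDerivAt
  have h2 := (hasDerivAt_id t).mul h1
  have h3 : HasDerivAt eta (deriv eta t) t :=
    ((eta_contDiff.differentiable (by simp)) t).hasDerivAt
  have h4 : HasDerivAt eta (deriv eta (16 * t)) (16 * t) :=
    ((eta_contDiff.differentiable (by simp)) _).hasDerivAt
  have h5 : HasDerivAt (fun t : ℝ => 16 * t) 16 t := by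
    simpa using (hasDerivAt_id t).const_mul (16 : ℝ)
  have h6 := h3.sub (h4.comp t h5)
  have h7 : (id * kap : ℝ → ℝ) = eta - eta ∘ fun t => 16 * t := by
    ext t; exact kap_mul t
  rw [h7] at h2
  have := h2.unique h6
  simp only [id, one_mul] at this
  rw [this]; ring

/-- the dyadic piece of the Cauchy kernel -/
noncomputable def phi (ζ : ℂ) : ℂ := (kap (‖ζ‖ ^ 2) : ℂ) * (starRingEnd ℂ) ζ

/-- the mollifier -/
noncomputable def psi (ζ : ℂ) : ℂ := ((2 * deriv eta (‖ζ‖ ^ 2) : ℝ) : ℂ)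

lemma phi_ker : Ker phi := by
  constructor
  · unfold phi
    have h1 : ContDiff ℝ ∞ (fun ζ : ℂ => kap (‖ζ‖ ^ 2)) :=
      kap_contDiff.comp (contDiff_norm_sq ℝ)
    exact (ofRealCLM.contDiff.comp h1).mul conjCLE.contDiff
  · intro ζ h
    have : 9 < ‖ζ‖ ^ 2 := by nlinarith
    unfold phi kap
    rw [eta_zero (by linarith), eta_zero (by linarith)]; simp

lemma psi_ker : Ker psi := by
  constructor
  · unfold psi
    have h0 : ContDiff ℝ ∞ (deriv eta) := by
      have := contDiff_infty_iff_deriv.1 eta_contDiff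
      exact this.2
    have h1 : ContDiff ℝ ∞ (fun ζ : ℂ => 2 * deriv eta (‖ζ‖ ^ 2)) :=
      contDiff_const.mul (h0.comp (contDiff_norm_sq ℝ))
    exact ofRealCLM.contDiff.comp h1
  · intro ζ h
    have : 9 < ‖ζ‖ ^ 2 := by nlinarith
    unfold psi
    rw [eta_deriv_zero (Or.inr (by linarith))]; simp

lemma psi_zero {ζ : ℂ} (h : ‖ζ‖ < 2) : psi ζ = 0 := by
  have : ‖ζ‖ ^ 2 < 4 := by nlinarith [norm_nonneg ζ]
  unfold psi
  rw [eta_deriv_zero (Or.inl (by linarith))]; simp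

lemma phi_dbar (ζ : ℂ) : dk phi 1 ζ + I * dk phi I ζ = psi ζ - 16 * psi (4 * ζ) := by
  have h1 : HasFDerivAt (fun ζ : ℂ => ‖ζ‖ ^ 2) (2 • innerSL ℝ ζ) ζ := by
    have := (hasStrictFDerivAt_norm_sq ζ).hasFDerivAt
    exact this
  have h2 : HasDerivAt kap (deriv kap (‖ζ‖ ^ 2)) (‖ζ‖ ^ 2) :=
    ((kap_contDiff.differentiable (by simp)) _).hasDerivAt
  have h3 := h2.comp_hasFDerivAt ζ h1
  have h4 := ofRealCLM.hasFDerivAt.comp ζ h3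
  have h5 := h4.mul (conjCLE.toContinuousLinearMap.hasFDerivAt (x := ζ))
  have h6 : fderiv ℝ phi ζ = _ := HasFDerivAt.fderiv (f := phi) h5
  have h7 := kap_deriv (‖ζ‖ ^ 2)
  have h8 : ‖(4 : ℂ) * ζ‖ ^ 2 = 16 * ‖ζ‖ ^ 2 := by
    rw [norm_mul]; norm_num; ring
  unfold dk
  rw [h6]
  unfold psi
  rw [h8]
  have h9 : ((‖ζ‖ ^ 2 : ℝ) : ℂ) = ζ * (starRingEnd ℂ) ζ := by
    rw [Complex.mul_conj, Complex.normSq_eq_norm_sq]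
  have h7' := congrArg (fun x : ℝ => (x : ℂ)) h7
  simp only [ofReal_add, ofReal_mul, ofReal_sub] at h7'
  rw [h9] at h7'
  simp only [_root_.add_apply, _root_.smul_apply, Function.comp_apply, ofRealCLM_apply,
    ContinuousLinearMap.comp_apply, innerSL_apply_apply, smul_eq_mul, ofReal_mul,
    ContinuousLinearEquiv.coe_coe, conjCLE_apply, map_one, conj_I, nsmul_eq_mul]
  have e1 : (inner ℝ ζ (1 : ℂ) : ℝ) = ζ.re := by simp [Complex.inner]
  have e2 : (inner ℝ ζ I : ℝ) = ζ.im := by simp [Complex.inner]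
  rw [e1, e2]
  have e3 : (ζ.re : ℂ) + ζ.im * I = ζ := Complex.re_add_im ζ
  simp only [ofReal_mul, ofReal_natCast, ofReal_ofNat, Nat.cast_ofNat] at h7' ⊢
  linear_combination 2 * h7' + (2 * (starRingEnd ℂ) ζ * ((deriv kap (‖ζ‖ ^ 2) : ℝ) : ℂ)) * e3
    - ((kap (‖ζ‖ ^ 2) : ℝ) : ℂ) * I_mul_I

lemma eta_antitone : Antitone eta := by
  intro a b h
  exact Real.smoothTransition.monotone (by linarith)

/-- normalizing constant -/
noncomputable def cst : ℂ := ∫ ζ, psi ζ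

lemma cst_ne : cst ≠ 0 := by
  have hpos : 0 < ∫ ζ : ℂ, (-(2 * deriv eta (‖ζ‖ ^ 2))) := by
    have hne : ∃ t, 0 ≤ t ∧ deriv eta t ≠ 0 := by
      by_contra! hcon
      have hall : ∀ t, deriv eta t = 0 := by
        intro t
        rcases le_or_gt 0 t with h | h
        · exact hcon t h
        · exact eta_deriv_zero (Or.inl (by linarith))
      have := is_const_of_deriv_eq_zero (eta_contDiff.differentiable (by simp)) hall 0 6
      rw [eta_one (by norm_num), eta_zero (by norm_num)] at this
      norm_num at this
    obtain ⟨t, ht, htn⟩ := hne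
    have hre : Continuous (fun ζ : ℂ => -(2 * deriv eta (‖ζ‖ ^ 2))) := by
      have h : Continuous (fun ζ : ℂ => 2 * deriv eta (‖ζ‖ ^ 2)) := by
        have h' := continuous_re.comp psi_ker.cont
        have h'' : (re ∘ psi) = fun ζ : ℂ => 2 * deriv eta (‖ζ‖ ^ 2) := by
          ext ζ
          unfold psi
          exact ofReal_re _
        rw [← h'']
        exact h'
      exact h.neg
    apply Continuous.integral_pos_of_hasCompactSupport_nonneg_nonzero hre (x := ((√t : ℝ) : ℂ))
    · apply HasCompactSupport.intro (isCompact_closedBall (0 : ℂ) 3)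
      intro x hx
      have h1 : psi x = 0 := psi_ker.2 x (by simpa using hx)
      unfold psi at h1
      have h2 := ofReal_eq_zero.1 h1
      simpa using h2
    · intro ζ
      have : deriv eta (‖ζ‖ ^ 2) ≤ 0 := eta_antitone.deriv_nonpos
      simp only [Pi.zero_apply]
      linarith
    · have : ‖((√t : ℝ) : ℂ)‖ ^ 2 = t := by
        rw [Complex.norm_real, Real.norm_eq_abs, sq_abs, Real.sq_sqrt ht]
      rw [this]
      simpa using htn
  intro h
  unfold cst psi at h
  rw [integral_complex_ofReal] at h
  have h2 := ofReal_eq_zero.1 h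
  rw [integral_neg, h2] at hpos
  simp at hpos

variable {W : Type} [NormedAddCommGroup W] [NormedSpace ℝ W] [NormedSpace ℂ W]
  [IsScalarTower ℝ ℂ W] [CompleteSpace W]

lemma lam_tele {g : ℂ → W} (hg : Continuous g) (z : ℂ) (j : ℕ) :
    Lam (dk phi 1) (sc j) g z + I • Lam (dk phi I) (sc j) g z =
      Lam psi (sc j) g z - Lam psi (sc (j + 1)) g z := by
  have h1 := lam_integrable (phi_ker.dk 1) (sc j) hg z
  have h2 := lam_integrable (phi_ker.dk I) (sc j) hg z
  have h3 := lam_integrable psi_ker (sc j) hg z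
  have h4 : Lam psi (sc (j + 1)) g z = ∫ ζ, (16 * psi (4 * ζ)) • g (z - sc j • ζ) := by
    have := Measure.integral_comp_smul (volume : Measure ℂ)
      (fun ζ => psi ζ • g (z - sc (j + 1) • ζ)) 4
    simp only [Complex.finrank_real_complex] at this
    have e1 : |((4 : ℝ) ^ 2)⁻¹| = 16⁻¹ := by rw [abs_of_pos (by positivity)]; norm_num
    rw [e1] at this
    unfold Lam
    have e2 : ∫ ζ, psi ζ • g (z - sc (j + 1) • ζ) =
        (16 : ℝ) • ((16 : ℝ)⁻¹ • ∫ ζ, psi ζ • g (z - sc (j + 1) • ζ)) := by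
      rw [smul_smul]; norm_num
    rw [e2, ← this, ← integral_smul]
    congr 1
    ext ζ
    have e3 : sc (j + 1) • ((4 : ℝ) • ζ) = sc j • ζ := by
      rw [smul_smul]
      congr 1
      unfold sc
      rw [pow_succ]; ring
    have e4 : (4 : ℝ) • ζ = 4 * ζ := by simp
    rw [e3, e4, ← smul_assoc]
    simp
  have h5 : Integrable (fun ζ => (16 * psi (4 * ζ)) • g (z - sc j • ζ)) := by
    have hc := psi_ker.cont
    apply Continuous.integrable_of_hasCompactSupport
    · fun_prop
    · apply HasCompactSupport.intro (isCompact_closedBall (0 : ℂ) 3)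
      intro x hx
      have hx' : 3 < ‖x‖ := by simpa using hx
      have : psi (4 * x) = 0 := psi_ker.2 _ (by rw [norm_mul]; norm_num; linarith)
      simp [this]
  rw [h4]
  unfold Lam
  have h2' : Integrable (fun ζ => I • dk phi I ζ • g (z - sc j • ζ)) := h2.smul I
  rw [← integral_smul, ← integral_add h1 h2', ← integral_sub h3 h5]
  congr 1
  ext ζ
  rw [smul_smul, ← add_smul, ← sub_smul, phi_dbar]

lemma lam_psi_tendsto {g : ℂ → W} (hg : Continuous g) {M : ℝ} (hM : ∀ z, ‖g z‖ ≤ M) (z : ℂ) :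
    Tendsto (fun n => Lam psi (sc n) g z) atTop (𝓝 (cst • g z)) := by
  have h1 : cst • g z = ∫ ζ, psi ζ • g z := by
    rw [integral_smul_const]; rfl
  rw [h1]
  unfold Lam
  apply tendsto_integral_of_dominated_convergence (fun ζ => ‖psi ζ‖ * M)
  · intro n
    exact (lam_integrable psi_ker _ hg z).aestronglyMeasurable
  · exact psi_ker.integrable.norm.mul_const M
  · intro n
    filter_upwards with ζ
    rw [norm_smul]
    gcongr
    exact hM _
  · filter_upwards with ζ
    apply Tendsto.const_smul
    have hs : Tendsto sc atTop (𝓝 0) := by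
      apply squeeze_zero (fun j => (sc_pos j).le) sc_le
      exact tendsto_pow_atTop_nhds_zero_of_lt_one (by norm_num) (by norm_num)
    have : Tendsto (fun n => z - sc n • ζ) atTop (𝓝 (z - (0 : ℝ) • ζ)) :=
      tendsto_const_nhds.sub (hs.smul_const ζ)
    have h2 := (hg.tendsto _).comp this
    simpa [Function.comp_def] using h2

lemma dbar_tele {g : ℂ → W} (hg : Continuous g) {M : ℝ} (hM : ∀ z, ‖g z‖ ≤ M)
    (hs : ∀ z, 1 ≤ ‖z‖ → g z = 0) {z : ℂ} (hz : ‖z‖ < 1) :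
    Tendsto (fun n => ∑ j ∈ Finset.range n,
      (Lam (dk phi 1) (sc j) g z + I • Lam (dk phi I) (sc j) g z)) atTop (𝓝 (-(cst • g z))) := by
  have h1 : ∀ n, ∑ j ∈ Finset.range n,
      (Lam (dk phi 1) (sc j) g z + I • Lam (dk phi I) (sc j) g z) =
      Lam psi (sc 0) g z - Lam psi (sc n) g z := by
    intro n
    simp_rw [lam_tele hg z]
    rw [Finset.sum_range_sub']
  have h2 : Lam psi (sc 0) g z = 0 := by
    unfold Lam
    apply integral_eq_zero_of_ae
    filter_upwards with ζ
    simp only [Pi.zero_apply]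
    rcases lt_or_ge ‖ζ‖ 2 with h | h
    · rw [psi_zero h, zero_smul]
    · rw [hs, smul_zero]
      have e1 : sc 0 • ζ = ζ := by simp [sc]
      rw [e1]
      have := norm_sub_norm_le ζ z
      rw [norm_sub_rev] at this
      linarith
  simp_rw [h1, h2, zero_sub]
  exact (lam_psi_tendsto hg hM z).neg

/-- The normalized Cauchy transform. -/
noncomputable def TT (g : ℂ → W) (z : ℂ) : W := (-cst⁻¹) • Tk phi g z

/-- The normalized Beurling transform. -/
noncomputable def ZZ (g : ℂ → W) (z : ℂ) : W :=
  (-cst⁻¹) • (Sk (dk phi 1) g z - I • Sk (dk phi I) g z)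

/-- the universal constant -/
noncomputable def C0 : ℝ :=
  ‖cst⁻¹‖ * (2 * N1 phi + CK (dk phi 1) + CK (dk phi I)) + 1

lemma C0_ge : 1 ≤ C0 := by
  unfold C0
  have := N1_nonneg phi
  have := CK_nonneg (dk phi 1)
  have := CK_nonneg (dk phi I)
  have : 0 ≤ ‖cst⁻¹‖ * (2 * N1 phi + CK (dk phi 1) + CK (dk phi I)) := by positivity
  linarith

lemma C0_ge1 : ‖cst⁻¹‖ * (2 * N1 phi) ≤ C0 := by
  unfold C0
  have h1 := CK_nonneg (dk phi 1)
  have h2 := CK_nonneg (dk phi I)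
  have := mul_nonneg (norm_nonneg (cst⁻¹)) (add_nonneg h1 h2)
  linarith

lemma C0_ge2 : ‖cst⁻¹‖ * (CK (dk phi 1) + CK (dk phi I)) ≤ C0 := by
  unfold C0
  have h1 := N1_nonneg phi
  have := mul_nonneg (norm_nonneg (cst⁻¹)) h1
  linarith

lemma TT_bound {g : ℂ → W} {M : ℝ} (hg : HB g M) (z : ℂ) : ‖TT g z‖ ≤ C0 * M := by
  have hM0 : 0 ≤ M := (norm_nonneg _).trans (hg.1 0)
  unfold TT
  rw [norm_smul, norm_neg]
  calc ‖cst⁻¹‖ * ‖Tk phi g z‖ ≤ ‖cst⁻¹‖ * (2 * N1 phi * M) := by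
        gcongr
        exact tk_bound phi_ker hg.1 z
    _ = ‖cst⁻¹‖ * (2 * N1 phi) * M := by ring
    _ ≤ _ := by
      gcongr
      exact C0_ge1

lemma ZZ_HB {g : ℂ → W} {M : ℝ} (hg : HB g M) : HB (ZZ g) (C0 * M) := by
  have hM0 : 0 ≤ M := (norm_nonneg _).trans (hg.1 0)
  have h1 := sk_HB (phi_ker.dk 1) (dk_mean_zero phi_ker 1) hg
  have h2 := sk_HB (phi_ker.dk I) (dk_mean_zero phi_ker I) hg
  constructor
  · intro z
    unfold ZZ
    rw [norm_smul, norm_neg]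
    have e1 := h1.1 z
    have e2 := h2.1 z
    calc _ ≤ ‖cst⁻¹‖ * ((CK (dk phi 1) + CK (dk phi I)) * M) := by
          gcongr
          refine (norm_sub_le _ _).trans ?_
          rw [norm_smul, norm_I, one_mul]
          linarith
      _ = ‖cst⁻¹‖ * (CK (dk phi 1) + CK (dk phi I)) * M := by ring
      _ ≤ _ := by
        gcongr
        exact C0_ge2
  · intro z z'
    unfold ZZ
    rw [← smul_sub, norm_smul, norm_neg]
    have e1 := h1.2 z z'
    have e2 := h2.2 z z'
    calc _ ≤ ‖cst⁻¹‖ * ((CK (dk phi 1) + CK (dk phi I)) * M * √‖z - z'‖) := by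
          gcongr
          have : Sk (dk phi 1) g z - I • Sk (dk phi I) g z -
              (Sk (dk phi 1) g z' - I • Sk (dk phi I) g z') =
              (Sk (dk phi 1) g z - Sk (dk phi 1) g z') -
              I • (Sk (dk phi I) g z - Sk (dk phi I) g z') := by
            rw [smul_sub]; abel
          rw [this]
          refine (norm_sub_le _ _).trans ?_
          rw [norm_smul, norm_I, one_mul]
          linarith
      _ = ‖cst⁻¹‖ * (CK (dk phi 1) + CK (dk phi I)) * M * √‖z - z'‖ := by ring
      _ ≤ _ := by
        gcongr
        exact C0_ge2

lemma TT_sub {g g' : ℂ → W} {M M' : ℝ} (hg : HB g M) (hg' : HB g' M') (z : ℂ) :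
    TT (g - g') z = TT g z - TT g' z := by
  unfold TT
  rw [tk_sub phi_ker hg hg', smul_sub]

lemma ZZ_sub {g g' : ℂ → W} {M M' : ℝ} (hg : HB g M) (hg' : HB g' M') (z : ℂ) :
    ZZ (g - g') z = ZZ g z - ZZ g' z := by
  unfold ZZ
  rw [sk_sub (phi_ker.dk 1) (dk_mean_zero phi_ker 1) hg hg',
    sk_sub (phi_ker.dk I) (dk_mean_zero phi_ker I) hg hg', ← smul_sub]
  congr 1
  rw [smul_sub]; abel

lemma TT_deriv {g : ℂ → W} {M : ℝ} (hg : HB g M) :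
    ∃ D : ℂ → ℂ →L[ℝ] W, (∀ z, HasFDerivAt (TT g) (D z) z) ∧ Continuous D ∧
      (∀ z, ‖D z‖ ≤ C0 * M) ∧ (∀ z, D z 1 - I • D z I = ZZ g z) ∧
      ((∀ z, 1 ≤ ‖z‖ → g z = 0) → ∀ z, ‖z‖ < 1 → D z 1 + I • D z I = g z) := by
  have hM0 : 0 ≤ M := (norm_nonneg _).trans (hg.1 0)
  have hD := fun z => tk_hasFDerivAt phi_ker hg z
  choose D hD hDv using hD
  have h1 := sk_HB (phi_ker.dk 1) (dk_mean_zero phi_ker 1) hg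
  have h2 := sk_HB (phi_ker.dk I) (dk_mean_zero phi_ker I) hg
  refine ⟨fun z => (-cst⁻¹) • D z, fun z => (hD z).const_smul (-cst⁻¹), ?_, ?_, ?_, ?_⟩
  · suffices hc : Continuous D from hc.const_smul (-cst⁻¹)
    have : D = fun z => reCLM.smulRight (D z 1) + imCLM.smulRight (D z I) := by
      ext z v
      have : v = v.re • (1 : ℂ) + v.im • I := by apply Complex.ext <;> simp
      conv_lhs => rw [this]
      rw [map_add, map_smul, map_smul]
      simp
    rw [this]
    have c1 : Continuous (fun z => D z 1) := by
      simp_rw [hDv]; exact h1.continuous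
    have c2 : Continuous (fun z => D z I) := by
      simp_rw [hDv]; exact h2.continuous
    have k1 : Continuous (fun w : W => reCLM.smulRight w) :=
      ((ContinuousLinearMap.smulRightL ℝ ℂ W) reCLM).continuous
    have k2 : Continuous (fun w : W => imCLM.smulRight w) :=
      ((ContinuousLinearMap.smulRightL ℝ ℂ W) imCLM).continuous
    exact (k1.comp c1).add (k2.comp c2)
  · intro z
    rw [norm_smul, norm_neg]
    have e1 := h1.1 z
    have e2 := h2.1 z
    calc _ ≤ ‖cst⁻¹‖ * ((CK (dk phi 1) + CK (dk phi I)) * M) := by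
          gcongr
          refine (clm_norm_le _).trans ?_
          rw [hDv, hDv]
          linarith
      _ = ‖cst⁻¹‖ * (CK (dk phi 1) + CK (dk phi I)) * M := by ring
      _ ≤ _ := by
        gcongr
        exact C0_ge2
  · intro z
    unfold ZZ
    rw [_root_.smul_apply, _root_.smul_apply, hDv, hDv, smul_sub, smul_comm I]
  · intro hs z hz
    rw [_root_.smul_apply, _root_.smul_apply, smul_comm I, ← smul_add, hDv, hDv]
    have s1 := (sk_summable (phi_ker.dk 1) (dk_mean_zero phi_ker 1) hg z).hasSum
    have s2 := (sk_summable (phi_ker.dk I) (dk_mean_zero phi_ker I) hg z).hasSum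
    have s3 := (s1.add (s2.const_smul I)).tendsto_sum_nat
    have s4 := tendsto_nhds_unique s3 (dbar_tele hg.continuous hg.1 hs hz)
    have s5 : Sk (dk phi 1) g z + I • Sk (dk phi I) g z = -(cst • g z) := s4
    rw [s5, neg_smul_neg, smul_smul, inv_mul_cancel₀ cst_ne, one_smul]

lemma pompeiu {u : ℂ → W} (hu : ContDiff ℝ 1 u) (hs : ∀ z, 1 ≤ ‖z‖ → u z = 0) {m : ℝ}
    (hm : ∀ z, ‖fderiv ℝ u z 1 + I • fderiv ℝ u z I‖ ≤ m) (z : ℂ) : ‖u z‖ ≤ C0 * m := by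
  have hm0 : 0 ≤ m := (norm_nonneg _).trans (hm 0)
  have hC := C0_ge
  rcases le_or_gt 1 ‖z‖ with hz | hz
  · rw [hs z hz, norm_zero]; positivity
  have hcs : HasCompactSupport u := by
    apply HasCompactSupport.intro (isCompact_closedBall (0 : ℂ) 1)
    intro x hx
    apply hs
    have : 1 < ‖x‖ := by simpa using hx
    exact this.le
  have hu0 := hu.continuous
  obtain ⟨M, hM⟩ := hcs.exists_bound_of_continuous hu0
  have hcf := hu.continuous_fderiv (by simp)
  have hcg : Continuous (fun z => fderiv ℝ u z 1 + I • fderiv ℝ u z I) := by fun_prop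
  have key : ∀ j, Lam (dk phi 1) (sc j) u z + I • Lam (dk phi I) (sc j) u z =
      sc j • Lam phi (sc j) (fun z => fderiv ℝ u z 1 + I • fderiv ℝ u z I) z := by
    intro j
    obtain ⟨D, hD, hDv⟩ := lam_hasFDerivAt phi_ker (sc_pos j) hu0 z
    obtain ⟨D', hD', hDv'⟩ := lam_hasFDerivAt' phi_ker (sc_pos j) hu hcs z
    have e := hD.unique hD'
    have e1 : ∀ v, Lam (dk phi v) (sc j) u z = sc j • Lam phi (sc j) (fun z => fderiv ℝ u z v) z := by
      intro v
      rw [← hDv', ← e, hDv, smul_inv_smul₀ (sc_pos j).ne']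
    rw [e1, e1, smul_comm I, ← smul_add]
    congr 1
    unfold Lam
    have c1 : Continuous (fun z => fderiv ℝ u z 1) := by fun_prop
    have c2 : Continuous (fun z => fderiv ℝ u z I) := by fun_prop
    have i1 : Integrable (fun ζ => phi ζ • fderiv ℝ u (z - sc j • ζ) 1) :=
      lam_integrable phi_ker _ c1 z
    have i2 : Integrable (fun ζ => I • phi ζ • fderiv ℝ u (z - sc j • ζ) I) :=
      (lam_integrable phi_ker _ c2 z).smul I
    rw [← integral_smul, ← integral_add i1 i2]
    congr 1
    ext ζ
    rw [smul_add, smul_comm I]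
  have ht := dbar_tele hu0 hM hs hz
  have hle : ‖-(cst • u z)‖ ≤ 2 * N1 phi * m := by
    apply le_of_tendsto ht.norm
    filter_upwards with n
    calc _ ≤ ∑ j ∈ Finset.range n, N1 phi * m * (1 / 2) ^ j := by
          apply norm_sum_le_of_le
          intro j _
          rw [key]
          exact tk_term_bound phi_ker hm z j
      _ ≤ ∑' j : ℕ, N1 phi * m * (1 / 2) ^ j := by
          apply Summable.sum_le_tsum _ _ (summable_half _)
          intro j _
          have := N1_nonneg phi
          positivity
      _ = 2 * N1 phi * m := by
          rw [tsum_mul_left, tsum_geometric_two]; ring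
  rw [norm_neg, norm_smul] at hle
  have h3 : ‖u z‖ = ‖cst⁻¹‖ * (‖cst‖ * ‖u z‖) := by
    rw [← mul_assoc, ← norm_mul, inv_mul_cancel₀ cst_ne]; simp
  rw [h3]
  calc _ ≤ ‖cst⁻¹‖ * (2 * N1 phi * m) := by gcongr
    _ = ‖cst⁻¹‖ * (2 * N1 phi) * m := by ring
    _ ≤ _ := by
      gcongr
      exact C0_ge1

end Specific
end HartogsAux

open Complex Metric
set_option linter.unusedSectionVars false

namespace HartogsAux
open MeasureTheory Filter Topology
open scoped ContDiff

section Discs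

/-- The real model space. -/
abbrev VV : Type := ℂ × ℂ

/-- Smallness in the second order sense, without derivatives. -/
structure SmallC2 (A : VV → (VV →L[ℝ] VV)) (ε : ℝ) : Prop where
  nn : 0 ≤ ε
  b0 : ∀ x, ‖A x‖ ≤ ε
  b1 : ∀ x y, ‖A x - A y‖ ≤ ε * ‖x - y‖
  b2 : ∀ x y h, ‖(A (x + h) - A x) - (A (y + h) - A y)‖ ≤ ε * ‖h‖ * ‖x - y‖

lemma HB.nonneg {X : Type*} [NormedAddCommGroup X] {g : ℂ → X} {M : ℝ} (h : HB g M) : 0 ≤ M :=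
  (norm_nonneg _).trans (h.1 0)

lemma HB.mono {X : Type*} [NormedAddCommGroup X] {g : ℂ → X} {M M' : ℝ} (h : HB g M)
    (hM : M ≤ M') : HB g M' := by
  refine ⟨fun z => (h.1 z).trans hM, fun z z' => (h.2 z z').trans ?_⟩
  gcongr

lemma HB.add {X : Type*} [NormedAddCommGroup X] {g g' : ℂ → X} {M M' : ℝ} (h : HB g M)
    (h' : HB g' M') : HB (fun z => g z + g' z) (M + M') := by
  refine ⟨fun z => (norm_add_le _ _).trans (add_le_add (h.1 z) (h'.1 z)), fun z z' => ?_⟩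
  have e : g z + g' z - (g z' + g' z') = (g z - g z') + (g' z - g' z') := by abel
  rw [e, add_mul]
  exact (norm_add_le _ _).trans (add_le_add (h.2 z z') (h'.2 z z'))

lemma HB.of_lip {X : Type*} [NormedAddCommGroup X] {g : ℂ → X} {M : ℝ}
    (h0 : ∀ z, ‖g z‖ ≤ M) (h1 : ∀ z z', ‖g z - g z'‖ ≤ M * ‖z - z'‖) : HB g (2 * M) := by
  have hM : 0 ≤ M := (norm_nonneg _).trans (h0 0)
  refine ⟨fun z => (h0 z).trans (by linarith), fun z z' => ?_⟩
  have hs := Real.sqrt_nonneg ‖z - z'‖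
  have hs2 := Real.mul_self_sqrt (norm_nonneg (z - z'))
  rcases le_or_gt (√‖z - z'‖) 1 with h | h
  · refine (h1 z z').trans ?_
    have : √‖z - z'‖ * √‖z - z'‖ ≤ 2 * √‖z - z'‖ := by nlinarith
    have := mul_le_mul_of_nonneg_left this hM
    rw [hs2] at this
    linarith
  · refine (norm_sub_le _ _).trans ?_
    have e1 := h0 z
    have e2 := h0 z'
    nlinarith

lemma HB.clm {L : ℂ → (VV →L[ℝ] VV)} {a : ℂ → VV} {M1 M2 : ℝ} (hL : HB L M1) (ha : HB a M2) :
    HB (fun z => L z (a z)) (2 * M1 * M2) := by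
  have h1 := hL.nonneg
  have h2 := ha.nonneg
  constructor
  · intro z
    refine ((L z).le_opNorm _).trans ?_
    have := mul_le_mul (hL.1 z) (ha.1 z) (norm_nonneg _) h1
    have := mul_nonneg h1 h2
    linarith
  · intro z z'
    have e : L z (a z) - L z' (a z') = (L z - L z') (a z) + L z' (a z - a z') := by
      rw [map_sub, _root_.sub_apply]; abel
    rw [e]
    refine (norm_add_le _ _).trans ?_
    have e1 := ((L z - L z').le_opNorm (a z)).trans
      (mul_le_mul (hL.2 z z') (ha.1 z) (norm_nonneg _) (by positivity))
    have e2 := ((L z').le_opNorm (a z - a z')).trans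
      (mul_le_mul (hL.1 z') (ha.2 z z') (norm_nonneg _) (by positivity))
    calc _ ≤ M1 * √‖z - z'‖ * M2 + M1 * (M2 * √‖z - z'‖) := add_le_add e1 e2
      _ = _ := by ring

lemma HB.lim {X : Type*} [NormedAddCommGroup X] {g : ℕ → ℂ → X} {f : ℂ → X} {M : ℝ}
    (h : ∀ n, HB (g n) M) (hf : ∀ z, Tendsto (fun n => g n z) atTop (𝓝 (f z))) : HB f M := by
  constructor
  · intro z
    exact le_of_tendsto (hf z).norm (Eventually.of_forall fun n => (h n).1 z)
  · intro z z'
    exact le_of_tendsto ((hf z).sub (hf z')).norm (Eventually.of_forall fun n => (h n).2 z z')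

lemma TT_lip {g : ℂ → VV} {M : ℝ} (hg : HB g M) (z z' : ℂ) :
    ‖TT g z - TT g z'‖ ≤ C0 * M * ‖z - z'‖ := by
  obtain ⟨D, hD, -, hb, -⟩ := TT_deriv hg
  exact Convex.norm_image_sub_le_of_norm_hasFDerivWithin_le
    (fun x _ => (hD x).hasFDerivWithinAt) (fun x _ => hb x) convex_univ (Set.mem_univ _)
    (Set.mem_univ _)

/-- the deformed coordinate map -/
noncomputable def UU (w : ℂ) (g : ℂ → VV) (z : ℂ) : VV := (z, w) + TT g z

/-- the nonlinear operator -/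
noncomputable def NN (A : VV → (VV →L[ℝ] VV)) (w : ℂ) (g : ℂ → VV) (z : ℂ) : VV :=
  A (UU w g z) ((2, 0) + ZZ g z)

lemma UU_lip {w : ℂ} {g : ℂ → VV} (hg : HB g 1) (z z' : ℂ) :
    ‖UU w g z - UU w g z'‖ ≤ 2 * C0 * ‖z - z'‖ := by
  have e : UU w g z - UU w g z' = (z - z', 0) + (TT g z - TT g z') := by
    unfold UU
    ext <;> simp <;> ring
  rw [e]
  refine (norm_add_le _ _).trans ?_
  have h1 := TT_lip hg z z'
  have h2 : ‖((z - z', 0) : VV)‖ = ‖z - z'‖ := by simp [Prod.norm_def]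
  rw [h2]
  have := C0_ge
  nlinarith [norm_nonneg (z - z')]

lemma PP_HB {g : ℂ → VV} (hg : HB g 1) : HB (fun z => ((2, 0) : VV) + ZZ g z) (3 * C0) := by
  have hC := C0_ge
  have h1 : HB (fun _ : ℂ => ((2, 0) : VV)) 2 := by
    refine ⟨fun _ => by simp [Prod.norm_def], fun z z' => ?_⟩
    simp
  exact (h1.add (ZZ_HB hg)).mono (by linarith)

lemma AU_HB {A : VV → (VV →L[ℝ] VV)} {ε : ℝ} (hA : SmallC2 A ε) {w : ℂ} {g : ℂ → VV}
    (hg : HB g 1) : HB (fun z => A (UU w g z)) (4 * C0 * ε) := by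
  have hC := C0_ge
  have hε := hA.nn
  have : HB (fun z => A (UU w g z)) (2 * (2 * C0 * ε)) := by
    apply HB.of_lip
    · intro z
      refine (hA.b0 _).trans ?_
      nlinarith
    · intro z z'
      refine (hA.b1 _ _).trans ?_
      have := mul_le_mul_of_nonneg_left (UU_lip (w := w) hg z z') hε
      linarith
  convert this using 1
  ring

lemma NN_HB {A : VV → (VV →L[ℝ] VV)} {ε : ℝ} (hA : SmallC2 A ε) {w : ℂ} {g : ℂ → VV}
    (hg : HB g 1) : HB (NN A w g) (100 * C0 ^ 3 * ε) := by
  have hC := C0_ge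
  have hε := hA.nn
  refine ((AU_HB (w := w) hA hg).clm (PP_HB hg)).mono ?_
  have h1 : C0 ^ 2 ≤ C0 ^ 3 := by gcongr; norm_num
  have h2 := mul_le_mul_of_nonneg_right h1 hε
  have : 0 ≤ C0 ^ 3 * ε := by positivity
  nlinarith

lemma NN_sub {A : VV → (VV →L[ℝ] VV)} {ε : ℝ} (hA : SmallC2 A ε) {w w' : ℂ} {g g' : ℂ → VV}
    (hg : HB g 1) (hg' : HB g' 1) {m : ℝ} (hm : HB (g - g') m) (hw : ‖w - w'‖ ≤ m) :
    HB (NN A w g - NN A w' g') (100 * C0 ^ 3 * ε * m) := by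
  have hC := C0_ge
  have hC0 : 0 ≤ C0 := by linarith
  have hε := hA.nn
  have hm0 := hm.nonneg
  have hd : ∀ z, UU w g z - UU w' g' z = (0, w - w') + TT (g - g') z := by
    intro z
    rw [TT_sub hg hg']
    unfold UU
    ext <;> simp <;> ring
  have hdb : ∀ z, ‖UU w g z - UU w' g' z‖ ≤ 2 * C0 * m := by
    intro z
    rw [hd]
    refine (norm_add_le _ _).trans ?_
    have h1 := TT_bound hm z
    have h2 : ‖((0, w - w') : VV)‖ = ‖w - w'‖ := by simp [Prod.norm_def]
    rw [h2]
    nlinarith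
  have hdl : ∀ z z', ‖(UU w g z - UU w' g' z) - (UU w g z' - UU w' g' z')‖ ≤
      C0 * m * ‖z - z'‖ := by
    intro z z'
    rw [hd, hd, add_sub_add_left_eq_sub]
    exact TT_lip hm z z'
  have ha : HB (fun z => A (UU w g z) - A (UU w' g' z)) (2 * (5 * C0 ^ 2 * ε * m)) := by
    apply HB.of_lip
    · intro z
      refine (hA.b1 _ _).trans ?_
      have := mul_le_mul_of_nonneg_left (hdb z) hε
      refine this.trans ?_
      have h1 : C0 ≤ C0 ^ 2 := by nlinarith
      have h2 := mul_le_mul_of_nonneg_right h1 (mul_nonneg hε hm0)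
      have : 0 ≤ C0 ^ 2 * (ε * m) := by positivity
      linarith
    · intro z z'
      set h := UU w g z - UU w' g' z with hh
      set h' := UU w g z' - UU w' g' z' with hh'
      have e1 : UU w g z = UU w' g' z + h := by rw [hh]; abel
      have e2 : UU w g z' = UU w' g' z' + h' := by rw [hh']; abel
      have e3 : A (UU w g z) - A (UU w' g' z) - (A (UU w g z') - A (UU w' g' z')) =
          ((A (UU w' g' z + h) - A (UU w' g' z)) - (A (UU w' g' z' + h) - A (UU w' g' z'))) +
          (A (UU w' g' z' + h) - A (UU w' g' z' + h')) := by
        rw [e1, e2]; abel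
      rw [e3]
      refine (norm_add_le _ _).trans ?_
      have b1 := hA.b2 (UU w' g' z) (UU w' g' z') h
      have b2 := hA.b1 (UU w' g' z' + h) (UU w' g' z' + h')
      rw [add_sub_add_left_eq_sub] at b2
      have b3 : ε * ‖h‖ * ‖UU w' g' z - UU w' g' z'‖ ≤
          ε * (2 * C0 * m) * (2 * C0 * ‖z - z'‖) := by
        gcongr
        · exact hdb z
        · exact UU_lip hg' z z'
      have b4 := mul_le_mul_of_nonneg_left (hdl z z') hε
      have h1 : C0 ≤ C0 ^ 2 := by nlinarith
      have h2 := mul_le_mul_of_nonneg_right h1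
        (mul_nonneg (mul_nonneg hε hm0) (norm_nonneg (z - z')))
      nlinarith
  have h1 := ha.clm (PP_HB hg)
  have h2 := (AU_HB (w := w') hA hg').clm (ZZ_HB hm)
  have e : NN A w g - NN A w' g' = fun z =>
      (A (UU w g z) - A (UU w' g' z)) ((2, 0) + ZZ g z) + A (UU w' g' z) (ZZ (g - g') z) := by
    ext1 z
    rw [ZZ_sub hg hg']
    simp only [NN, Pi.sub_apply, _root_.sub_apply, map_add, map_sub]
    abel
  rw [e]
  refine (h1.add h2).mono ?_
  have h1 : C0 ^ 2 ≤ C0 ^ 3 := by gcongr; norm_num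
  have h2 := mul_le_mul_of_nonneg_right h1 (mul_nonneg hε hm0)
  have : 0 ≤ C0 ^ 3 * (ε * m) := by positivity
  nlinarith

/-- the Picard iterates -/
noncomputable def GG (A : VV → (VV →L[ℝ] VV)) (w : ℂ) : ℕ → ℂ → VV
  | 0 => fun _ => 0
  | n + 1 => NN A w (GG A w n)

lemma HB_zero {X : Type*} [NormedAddCommGroup X] {M : ℝ} (hM : 0 ≤ M) :
    HB (fun _ : ℂ => (0 : X)) M := by
  refine ⟨fun _ => by simpa, fun z z' => ?_⟩
  simp only [sub_self, norm_zero]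
  positivity

lemma GG_HB {A : VV → (VV →L[ℝ] VV)} {ε : ℝ} (hA : SmallC2 A ε) (h1 : 100 * C0 ^ 3 * ε ≤ 1)
    (w : ℂ) (n : ℕ) : HB (GG A w n) (100 * C0 ^ 3 * ε) := by
  have hC := C0_ge
  have hε := hA.nn
  induction n with
  | zero => exact HB_zero (by positivity)
  | succ n ih => exact NN_HB hA (ih.mono h1)

lemma GG_cauchy {A : VV → (VV →L[ℝ] VV)} {ε : ℝ} (hA : SmallC2 A ε)
    (h1 : 100 * C0 ^ 3 * ε ≤ 1) (w : ℂ) (n : ℕ) :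
    ∀ k, HB (GG A w (n + k) - GG A w n) ((100 * C0 ^ 3 * ε) ^ n) := by
  have hC := C0_ge
  have hε := hA.nn
  induction n with
  | zero =>
    intro k
    have : GG A w (0 + k) - GG A w 0 = GG A w k := by
      ext1 z
      simp [GG]
    rw [this, pow_zero]
    exact (GG_HB hA h1 w k).mono h1
  | succ n ih =>
    intro k
    have e : n + 1 + k = (n + k) + 1 := by ring
    rw [e, pow_succ']
    apply NN_sub hA ((GG_HB hA h1 w _).mono h1) ((GG_HB hA h1 w _).mono h1) (ih k)
    simp only [sub_self, norm_zero]
    positivity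

lemma GG_lip {A : VV → (VV →L[ℝ] VV)} {ε : ℝ} (hA : SmallC2 A ε)
    (h1 : 100 * C0 ^ 3 * ε ≤ 1) (w w' : ℂ) (n : ℕ) :
    HB (GG A w n - GG A w' n) (100 * C0 ^ 3 * ε * ‖w - w'‖) := by
  have hC := C0_ge
  have hε := hA.nn
  induction n with
  | zero =>
    have : GG A w 0 - GG A w' 0 = fun _ => 0 := by
      ext1 z
      simp [GG]
    rw [this]
    exact HB_zero (by positivity)
  | succ n ih =>
    apply NN_sub hA ((GG_HB hA h1 w _).mono h1) ((GG_HB hA h1 w' _).mono h1)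
      (ih.mono _) le_rfl
    nlinarith [norm_nonneg (w - w')]

lemma fixed_point {A : VV → (VV →L[ℝ] VV)} {ε : ℝ} (hA : SmallC2 A ε)
    (h1 : 100 * C0 ^ 3 * ε ≤ 1 / 2) :
    ∃ g : ℂ → ℂ → VV, (∀ w, HB (g w) (100 * C0 ^ 3 * ε)) ∧ (∀ w, NN A w (g w) = g w) ∧
      ∀ w w', HB (g w - g w') (100 * C0 ^ 3 * ε * ‖w - w'‖) := by
  have hC := C0_ge
  have hε := hA.nn
  have h1' : 100 * C0 ^ 3 * ε ≤ 1 := by linarith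
  have h0 : 0 ≤ 100 * C0 ^ 3 * ε := by positivity
  have hlim0 : Tendsto (fun n => (100 * C0 ^ 3 * ε) ^ n) atTop (𝓝 0) :=
    tendsto_pow_atTop_nhds_zero_of_lt_one h0 (by linarith)
  have hex : ∀ w z, ∃ l, Tendsto (fun n => GG A w n z) atTop (𝓝 l) := by
    intro w z
    apply cauchySeq_tendsto_of_complete
    refine cauchySeq_of_le_tendsto_0' (fun n => (100 * C0 ^ 3 * ε) ^ n) ?_ hlim0
    intro n m hnm
    obtain ⟨k, rfl⟩ := Nat.exists_eq_add_of_le hnm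
    rw [dist_comm, dist_eq_norm]
    exact (GG_cauchy hA h1' w n k).1 z
  choose g hg using hex
  have hgH : ∀ w, HB (g w) (100 * C0 ^ 3 * ε) := fun w =>
    HB.lim (fun n => GG_HB hA h1' w n) (hg w)
  have hgd : ∀ w n, HB (g w - GG A w n) ((100 * C0 ^ 3 * ε) ^ n) := by
    intro w n
    apply HB.lim (GG_cauchy hA h1' w n)
    intro z
    have h2 := (tendsto_add_atTop_iff_nat n).2 (hg w z)
    have h3 := h2.sub_const (GG A w n z)
    refine h3.congr ?_
    intro k
    simp [add_comm]
  refine ⟨g, hgH, ?_, ?_⟩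
  · intro w
    ext1 z
    have h2 : Tendsto (fun n => GG A w (n + 1) z) atTop (𝓝 (NN A w (g w) z)) := by
      rw [tendsto_iff_norm_sub_tendsto_zero]
      apply squeeze_zero (fun _ => norm_nonneg _) _ hlim0
      intro n
      have h3 := NN_sub hA ((hgH w).mono h1') ((GG_HB hA h1' w n).mono h1') (hgd w n)
        (w := w) (w' := w) (by simp only [sub_self, norm_zero]; positivity)
      have h4 := h3.1 z
      rw [norm_sub_rev]
      refine h4.trans ?_
      have : 0 ≤ (100 * C0 ^ 3 * ε) ^ n := by positivity
      nlinarith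
    exact tendsto_nhds_unique h2 ((tendsto_add_atTop_iff_nat 1).2 (hg w z))
  · intro w w'
    exact HB.lim (fun n => GG_lip hA h1' w w' n) (fun z => (hg w z).sub (hg w' z))

/-- the threshold for smallness -/
noncomputable def eps0 : ℝ := 1 / (1600 * C0 ^ 4)

lemma eps0_pos : 0 < eps0 := by
  have := C0_ge
  unfold eps0
  positivity

/-- Existence of a family of holomorphic discs. -/
lemma discs {A : VV → (VV →L[ℝ] VV)} (hA : SmallC2 A eps0) (hs : ∀ x, 3 / 4 ≤ ‖x‖ → A x = 0) :
    ∃ u : VV → VV, (∀ x, ‖u x‖ ≤ 1 / 8) ∧ (∀ x y, ‖u x - u y‖ ≤ 1 / 8 * ‖x - y‖) ∧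
      ∀ w, ∃ D : ℂ → ℂ →L[ℝ] VV, (∀ z, HasFDerivAt (fun z => (z, w) + u (z, w)) (D z) z) ∧
        Continuous D ∧ (∀ z, ‖D z‖ ≤ 2) ∧
        ∀ z, ‖z‖ < 1 → D z 1 + I • D z I = A ((z, w) + u (z, w)) (D z 1 - I • D z I) := by
  have hC := C0_ge
  have hδ : 100 * C0 ^ 3 * eps0 = 1 / (16 * C0) := by
    unfold eps0
    field_simp
    norm_num
  have hC1 : C0 * (1 / (16 * C0)) = 1 / 16 := by field_simp
  have hle : 1 / (16 * C0) ≤ 1 / 16 := by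
    apply one_div_le_one_div_of_le <;> linarith
  obtain ⟨g, hgH, hgN, hgl⟩ := fixed_point hA (by rw [hδ]; linarith)
  rw [hδ] at hgH hgl
  refine ⟨fun x => TT (g x.2) x.1, ?_, ?_, ?_⟩
  · intro x
    refine (TT_bound (hgH x.2) x.1).trans ?_
    rw [hC1]; norm_num
  · intro x y
    have h1 := TT_lip (hgH x.2) x.1 y.1
    have h2 := TT_bound (hgl x.2 y.2) y.1
    rw [TT_sub (hgH _) (hgH _)] at h2
    rw [← mul_assoc] at h2
    rw [hC1] at h1 h2
    have e : TT (g x.2) x.1 - TT (g y.2) y.1 =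
      (TT (g x.2) x.1 - TT (g x.2) y.1) + (TT (g x.2) y.1 - TT (g y.2) y.1) := by abel
    rw [e]
    refine (norm_add_le _ _).trans ?_
    have h3 : ‖x.1 - y.1‖ ≤ ‖x - y‖ := norm_fst_le (x - y)
    have h4 : ‖x.2 - y.2‖ ≤ ‖x - y‖ := norm_snd_le (x - y)
    linarith
  · intro w
    obtain ⟨D, hD, hDc, hDb, hD1, hD2⟩ := TT_deriv (hgH w)
    rw [hC1] at hDb
    have hsupp : ∀ z, 1 ≤ ‖z‖ → g w z = 0 := by
      intro z hz
      rw [← hgN w]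
      unfold NN
      rw [hs, _root_.zero_apply]
      have h1 := TT_bound (hgH w) z
      rw [hC1] at h1
      have h2 : ‖z‖ ≤ ‖((z, w) : VV)‖ := norm_fst_le ((z, w) : VV)
      have h3 : ‖((z, w) : VV)‖ - ‖TT (g w) z‖ ≤ ‖UU w (g w) z‖ := by
        unfold UU
        have := norm_sub_norm_le ((z, w) : VV) (-TT (g w) z)
        rwa [norm_neg, sub_neg_eq_add] at this
      linarith
    refine ⟨fun z => ContinuousLinearMap.inl ℝ ℂ ℂ + D z, ?_, ?_, ?_, ?_⟩
    · intro z
      have h1 : HasFDerivAt (fun z : ℂ => ((z, w) : VV)) (ContinuousLinearMap.inl ℝ ℂ ℂ) z :=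
        (hasFDerivAt_id z).prodMk (hasFDerivAt_const w z)
      exact h1.add (hD z)
    · exact continuous_const.add hDc
    · intro z
      refine (norm_add_le _ _).trans ?_
      have h1 := ContinuousLinearMap.norm_inl_le_one ℝ ℂ ℂ
      linarith [hDb z]
    · intro z hz
      have h1 := hD1 z
      have h2 := hD2 hsupp z hz
      have h3 := congrFun (hgN w) z
      have e1 : (ContinuousLinearMap.inl ℝ ℂ ℂ + D z) 1 + I • (ContinuousLinearMap.inl ℝ ℂ ℂ + D z) I
          = D z 1 + I • D z I := by
        simp only [_root_.add_apply, ContinuousLinearMap.inl_apply, smul_add]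
        ext
        · simp
          ring
        · simp
      have e2 : (ContinuousLinearMap.inl ℝ ℂ ℂ + D z) 1 - I • (ContinuousLinearMap.inl ℝ ℂ ℂ + D z) I
          = (2, 0) + (D z 1 - I • D z I) := by
        simp only [_root_.add_apply, ContinuousLinearMap.inl_apply, smul_add]
        ext <;> simp <;> ring
      rw [e1, e2, h1, h2]
      exact h3.symm

end Discs
end HartogsAux

open Complex Metric
set_option linter.unusedSectionVars false

namespace HartogsAux
open MeasureTheory Filter Topology
open scoped ContDiff

section Scaling

lemma small_of_zero {X : Type*} [NormedAddCommGroup X] {F : ℝ × VV → X} (hF : Continuous F)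
    (h0 : ∀ x, F (0, x) = 0) (hs : ∀ ρ x, 5 / 8 < ‖x‖ → F (ρ, x) = 0) {ε : ℝ} (hε : 0 < ε) :
    ∀ᶠ ρ in 𝓝 (0 : ℝ), ∀ x, ‖F (ρ, x)‖ ≤ ε := by
  have h1 : ∀ᶠ ρ in 𝓝 (0 : ℝ), ∀ x ∈ closedBall (0 : VV) 1, ‖F (ρ, x)‖ < ε := by
    apply (isCompact_closedBall (0 : VV) 1).eventually_forall_of_forall_eventually
      (P := fun ρ x => ‖F (ρ, x)‖ < ε)
    intro y _
    have : ContinuousAt (fun z : ℝ × VV => ‖F (z.1, z.2)‖) (0, y) := by fun_prop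
    apply this.eventually_lt_const
    simpa [h0] using hε
  filter_upwards [h1] with ρ hρ x
  by_cases hx : x ∈ closedBall (0 : VV) 1
  · exact (hρ x hx).le
  · rw [hs, norm_zero]
    · exact hε.le
    · have : 1 < ‖x‖ := by simpa using hx
      linarith

/-- partial derivative in the second variable -/
noncomputable def pd {X : Type*} [NormedAddCommGroup X] [NormedSpace ℝ X] (F : ℝ × VV → X)
    (q : ℝ × VV) : VV →L[ℝ] X := (fderiv ℝ F q).comp (ContinuousLinearMap.inr ℝ ℝ VV)

lemma pd_contDiff {X : Type*} [NormedAddCommGroup X] [NormedSpace ℝ X] {F : ℝ × VV → X}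
    (hF : ContDiff ℝ ∞ F) : ContDiff ℝ ∞ (pd F) := by
  unfold pd
  have := hF.fderiv_right (m := ∞) (by simp)
  exact this.clm_comp contDiff_const

lemma pd_hasFDerivAt {X : Type*} [NormedAddCommGroup X] [NormedSpace ℝ X] {F : ℝ × VV → X}
    (hF : ContDiff ℝ ∞ F) (ρ : ℝ) (x : VV) :
    HasFDerivAt (fun x => F (ρ, x)) (pd F (ρ, x)) x := by
  have h1 : HasFDerivAt F (fderiv ℝ F (ρ, x)) (ρ, x) :=
    ((hF.differentiable (by simp)) _).hasFDerivAt
  have h2 : HasFDerivAt (fun x : VV => ((ρ, x) : ℝ × VV)) (ContinuousLinearMap.inr ℝ ℝ VV) x :=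
    (hasFDerivAt_const ρ x).prodMk (hasFDerivAt_id x)
  exact h1.comp x h2

lemma pd_zero {X : Type*} [NormedAddCommGroup X] [NormedSpace ℝ X] {F : ℝ × VV → X}
    (hF : ContDiff ℝ ∞ F) (h0 : ∀ x, F (0, x) = 0) (x : VV) : pd F (0, x) = 0 := by
  have h1 := pd_hasFDerivAt hF 0 x
  simp only [h0] at h1
  exact h1.unique (hasFDerivAt_const 0 x)

lemma pd_supp {X : Type*} [NormedAddCommGroup X] [NormedSpace ℝ X] {F : ℝ × VV → X}
    (hF : ContDiff ℝ ∞ F) (hs : ∀ ρ x, 5 / 8 < ‖x‖ → F (ρ, x) = 0) (ρ : ℝ) (x : VV)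
    (hx : 5 / 8 < ‖x‖) : pd F (ρ, x) = 0 := by
  have h1 := pd_hasFDerivAt hF ρ x
  have h2 : (fun x => F (ρ, x)) =ᶠ[𝓝 x] fun _ => 0 := by
    filter_upwards [(isOpen_lt continuous_const continuous_norm).mem_nhds hx] with y hy
    exact hs ρ y hy
  exact h1.unique ((hasFDerivAt_const 0 x).congr_of_eventuallyEq h2)

lemma smallC2_of {F : ℝ × VV → (VV →L[ℝ] VV)} (hF : ContDiff ℝ ∞ F)
    (h0 : ∀ x, F (0, x) = 0) (hs : ∀ ρ x, 5 / 8 < ‖x‖ → F (ρ, x) = 0) {ε : ℝ} (hε : 0 < ε) :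
    ∀ᶠ ρ in 𝓝 (0 : ℝ), SmallC2 (fun x => F (ρ, x)) ε := by
  have hF1 := pd_contDiff hF
  have hF2 := pd_contDiff hF1
  filter_upwards [small_of_zero hF.continuous h0 hs hε,
    small_of_zero hF1.continuous (pd_zero hF h0) (pd_supp hF hs) hε,
    small_of_zero hF2.continuous (pd_zero hF1 (pd_zero hF h0)) (pd_supp hF1 (pd_supp hF hs)) hε]
    with ρ h1 h2 h3
  refine ⟨hε.le, h1, fun x y => ?_, fun x y h => ?_⟩
  · exact Convex.norm_image_sub_le_of_norm_hasFDerivWithin_le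
      (fun x _ => (pd_hasFDerivAt hF ρ x).hasFDerivWithinAt) (fun x _ => h2 x) convex_univ
      (Set.mem_univ _) (Set.mem_univ _)
  · refine Convex.norm_image_sub_le_of_norm_hasFDerivWithin_le
      (f := fun x => F (ρ, x + h) - F (ρ, x))
      (f' := fun x => pd F (ρ, x + h) - pd F (ρ, x)) (C := ε * ‖h‖)
      (fun x _ => ?_) (fun x _ => ?_) convex_univ (Set.mem_univ _) (Set.mem_univ _)
    · apply HasFDerivAt.hasFDerivWithinAt
      refine HasFDerivAt.sub ?_ (pd_hasFDerivAt hF ρ x)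
      have := (pd_hasFDerivAt hF ρ (x + h)).comp x ((hasFDerivAt_id x).add_const h)
      exact this
    · have := Convex.norm_image_sub_le_of_norm_hasFDerivWithin_le
        (fun x _ => (pd_hasFDerivAt hF1 ρ x).hasFDerivWithinAt) (fun x _ => h3 x) convex_univ
        (Set.mem_univ x) (Set.mem_univ (x + h))
      simpa using this

lemma globalize {X : Type*} [NormedAddCommGroup X] [NormedSpace ℝ X] {B : VV → X}
    (h1 : ∀ᶠ y in 𝓝 0, ContDiffAt ℝ ∞ B y) : ∃ B' : VV → X, ContDiff ℝ ∞ B' ∧ B' =ᶠ[𝓝 0] B := by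
  obtain ⟨r, hr, hball⟩ := Metric.eventually_nhds_iff_ball.1 h1
  let f : ContDiffBump (0 : VV) := ⟨r / 4, r / 2, by positivity, by linarith⟩
  refine ⟨fun x => f x • B x, ?_, ?_⟩
  · rw [contDiff_iff_contDiffAt]
    intro x
    by_cases hx : x ∈ ball (0 : VV) r
    · exact f.contDiff.contDiffAt.smul (hball x hx)
    · have hx' : r ≤ ‖x‖ := by simpa using hx
      have : (fun x => f x • B x) =ᶠ[𝓝 x] fun _ => 0 := by
        have hx2 : r / 2 < ‖x‖ := by linarith
        filter_upwards [(isOpen_lt continuous_const continuous_norm).mem_nhds hx2] with y hy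
        rw [f.zero_of_le_dist, zero_smul]
        rw [dist_zero_right]
        exact le_of_lt hy
      exact contDiffAt_const.congr_of_eventuallyEq this
  · filter_upwards [closedBall_mem_nhds (0 : VV) (show 0 < r / 4 by positivity)] with y hy
    rw [f.one_of_mem_closedBall hy, one_smul]

lemma ring_aux {R : Type*} [Ring R] (x y : R) (hx : IsUnit x) :
    x * (-(Ring.inverse x * y)) = -y := by
  rw [mul_neg, ← mul_assoc, Ring.mul_inverse_cancel _ hx, one_mul]

lemma clm_mul_apply (A B : VV →L[ℝ] VV) (x : VV) : (A * B) x = A (B x) := rfl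

/-- the standard complex structure -/
noncomputable def Iop : VV →L[ℝ] VV := I • (1 : VV →L[ℝ] VV)

lemma Iop_apply (x : VV) : Iop x = I • x := rfl

lemma Iop_mul : Iop * Iop = -1 := by
  ext x <;> simp [Iop, ← mul_assoc]

lemma cayley {Jt : VV → (VV →L[ℝ] VV)} (hJt' : ∀ᶠ y in 𝓝 0, ContDiffAt ℝ ∞ Jt y) (h0 : Jt 0 = Iop)
    (hsq : ∀ᶠ y in 𝓝 0, Jt y * Jt y = -1) :
    ∃ B : VV → (VV →L[ℝ] VV), ContDiff ℝ ∞ B ∧ B 0 = 0 ∧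
      ∀ᶠ y in 𝓝 0, ∀ a b : VV, a + I • b = B y (a - I • b) → Jt y a = b := by
  have hu0 : (1 - Jt 0 * Iop) = (2 : VV →L[ℝ] VV) := by
    rw [h0, Iop_mul, sub_neg_eq_add]
    exact one_add_one_eq_two
  have hJt := hJt'.self_of_nhds
  have hunit : IsUnit (1 - Jt 0 * Iop) := by
    rw [hu0]
    have : (2 : VV →L[ℝ] VV) = algebraMap ℝ (VV →L[ℝ] VV) 2 :=
      (map_ofNat (algebraMap ℝ (VV →L[ℝ] VV)) 2).symm
    rw [this]
    exact (isUnit_iff_ne_zero.2 (by norm_num)).map _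
  have hsm : ContDiffAt ℝ ∞ (fun y => 1 - Jt y * Iop) 0 :=
    contDiffAt_const.sub (hJt.mul contDiffAt_const)
  have hopen : ∀ᶠ y in 𝓝 (0 : VV), IsUnit (1 - Jt y * Iop) :=
    hsm.continuousAt.eventually_mem (Units.isOpen.mem_nhds hunit)
  have hB0 : ∀ᶠ x in 𝓝 0, ContDiffAt ℝ ∞
      (fun y => -(Ring.inverse (1 - Jt y * Iop) * (1 + Jt y * Iop))) x := by
    filter_upwards [hJt', hopen] with x hx hux
    have hsmx : ContDiffAt ℝ ∞ (fun y => 1 - Jt y * Iop) x :=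
      contDiffAt_const.sub (hx.mul contDiffAt_const)
    have hinv : ContDiffAt ℝ ∞ (fun y => Ring.inverse (1 - Jt y * Iop)) x := by
      obtain ⟨v, hv⟩ := hux
      have h1 := contDiffAt_ringInverse ℝ (n := ∞) v
      rw [hv] at h1
      exact h1.comp x hsmx
    exact (hinv.mul (contDiffAt_const.add (hx.mul contDiffAt_const))).neg
  obtain ⟨B, hB, hBe⟩ := globalize hB0
  refine ⟨B, hB, ?_, ?_⟩
  · rw [hBe.self_of_nhds]
    simp only [h0, Iop_mul]
    simp
  · filter_upwards [hBe, hopen, hsq] with y h1 h2 h3 a b hab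
    rw [h1] at hab
    have h4 := congrArg (fun v => (1 - Jt y * Iop) v) hab
    rw [← clm_mul_apply, ring_aux _ _ h2] at h4
    simp only [_root_.sub_apply, _root_.neg_apply, _root_.add_apply,
      clm_mul_apply, one_apply_eq_self, Iop_apply] at h4
    simp only [smul_sub, smul_add, map_sub, map_add, smul_smul, I_mul_I, neg_smul, one_smul,
      map_neg] at h4
    have h5 : (2 : ℝ) • (a + Jt y b) = 0 := by
      rw [two_smul]
      have := sub_eq_zero.2 h4
      rw [← this]
      abel
    have h6 : a = - Jt y b := by
      have := (smul_eq_zero.1 h5).resolve_left (by norm_num)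
      exact eq_neg_of_add_eq_zero_left this
    have h7 : Jt y (Jt y b) = -b := by
      have := congrArg (fun L : VV →L[ℝ] VV => L b) h3
      simpa using this
    rw [h6, map_neg, h7, neg_neg]

lemma exists_frame {J0 : VV →L[ℝ] VV} (hJ0 : ∀ X, J0 (J0 X) = -X) :
    ∃ T : VV ≃L[ℝ] VV, ∀ x, T (I • x) = J0 (T x) := by
  let e1 : VV := (1, 0)
  let S : Submodule ℝ VV := Submodule.span ℝ {e1, J0 e1}
  have hS : S ≠ ⊤ := by
    intro h
    have h1 : Module.finrank ℝ S ≤ 2 := by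
      classical
      have h2 := finrank_span_finset_le_card (R := ℝ) ({e1, J0 e1} : Finset VV)
      have h3 : Finset.card ({e1, J0 e1} : Finset VV) ≤ 2 := Finset.card_le_two
      have h4 : S = Submodule.span ℝ (({e1, J0 e1} : Finset VV) : Set VV) := by
        simp [S]
      rw [h4]
      exact h2.trans h3
    rw [h, finrank_top] at h1
    have h2 : Module.finrank ℝ VV = 4 := by
      simp [VV, Module.finrank_prod, Complex.finrank_real_complex]
    omega
  obtain ⟨e2, he2⟩ := SetLike.exists_not_mem_of_ne_top S hS
  let L : VV →L[ℝ] VV :=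
    (reCLM.comp (ContinuousLinearMap.fst ℝ ℂ ℂ)).smulRight e1 +
    (imCLM.comp (ContinuousLinearMap.fst ℝ ℂ ℂ)).smulRight (J0 e1) +
    (reCLM.comp (ContinuousLinearMap.snd ℝ ℂ ℂ)).smulRight e2 +
    (imCLM.comp (ContinuousLinearMap.snd ℝ ℂ ℂ)).smulRight (J0 e2)
  have hL : ∀ x : VV, L x = x.1.re • e1 + x.1.im • J0 e1 + x.2.re • e2 + x.2.im • J0 e2 := by
    intro x
    simp [L]
  have hLI : ∀ x, L (I • x) = J0 (L x) := by
    intro x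
    rw [hL, hL]
    simp only [map_add, map_smul, hJ0]
    simp
    abel
  have hLc : ∀ (c : ℂ) x, L (c • x) = c.re • L x + c.im • J0 (L x) := by
    intro c x
    have : c • x = c.re • x + c.im • (I • x) := by
      conv_lhs => rw [← Complex.re_add_im c]
      rw [add_smul, mul_smul]
      rfl
    rw [this, map_add, map_smul, map_smul, hLI]
  have hinj : Function.Injective L := by
    rw [injective_iff_map_eq_zero]
    intro x hx
    have hx' : ∀ c : ℂ, L (c • x) = 0 := by
      intro c
      rw [hLc, hx]; simp
    by_cases hw : x.2 = 0
    · by_cases hz : x.1 = 0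
      · exact Prod.ext hz hw
      · exfalso
        have h1 := hx' (x.1)⁻¹
        rw [hL] at h1
        simp only [Prod.smul_fst, Prod.smul_snd, smul_eq_mul, inv_mul_cancel₀ hz, hw, mul_zero] at h1
        simp [e1] at h1
    · exfalso
      have h1 := hx' (x.2)⁻¹
      rw [hL] at h1
      simp only [Prod.smul_fst, Prod.smul_snd, smul_eq_mul, inv_mul_cancel₀ hw, one_re, one_im,
        one_smul, zero_smul, add_zero] at h1
      apply he2
      have h2 : e2 = -(((x.2)⁻¹ * x.1).re • e1 + ((x.2)⁻¹ * x.1).im • J0 e1) :=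
        eq_neg_of_add_eq_zero_right h1
      rw [h2]
      apply S.neg_mem
      apply S.add_mem
      · exact S.smul_mem _ (Submodule.subset_span (by simp))
      · exact S.smul_mem _ (Submodule.subset_span (by simp))
  refine ⟨(LinearEquiv.ofInjectiveEndo L.toLinearMap hinj).toContinuousLinearEquiv, ?_⟩
  intro x
  exact hLI x

/-- Families of holomorphic discs at small scale. -/
lemma exists_discs {U : Set VV} (hU : IsOpen U) {p : VV} (hp : p ∈ U) {J : VV → (VV →L[ℝ] VV)}
    (hJ : ContDiffOn ℝ ∞ J U) (hJ2 : ∀ x ∈ U, ∀ X, J x (J x X) = -X) :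
    ∃ T : VV ≃L[ℝ] VV, (∀ x, T (I • x) = J p (T x)) ∧ ∀ᶠ ρ in 𝓝[>] (0 : ℝ),
      ∃ u : VV → VV, (∀ x, ‖u x‖ ≤ 1 / 8) ∧ (∀ x y, ‖u x - u y‖ ≤ 1 / 8 * ‖x - y‖) ∧
      ∀ w, ‖w‖ ≤ 3 / 8 → ∃ D : ℂ → ℂ →L[ℝ] VV,
        (∀ z, HasFDerivAt (fun z => (z, w) + u (z, w)) (D z) z) ∧
        Continuous D ∧ (∀ z, ‖D z‖ ≤ 2) ∧
        ∀ z, ‖z‖ ≤ 3 / 8 → p + T (ρ • ((z, w) + u (z, w))) ∈ U ∧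
          J (p + T (ρ • ((z, w) + u (z, w)))) (T (D z 1)) = T (D z I) := by
  obtain ⟨T, hT⟩ := exists_frame (hJ2 p hp)
  refine ⟨T, hT, ?_⟩
  let Jt : VV → (VV →L[ℝ] VV) := fun y => (T.symm : VV →L[ℝ] VV) * J (p + T y) * (T : VV →L[ℝ] VV)
  have hmap : ContDiff ℝ ∞ (fun y : VV => p + T y) := contDiff_const.add T.contDiff
  have hin : ∀ᶠ y in 𝓝 (0 : VV), p + T y ∈ U := by
    apply hmap.continuous.continuousAt.eventually_mem
    simpa using hU.mem_nhds hp
  have hJt : ∀ᶠ y in 𝓝 0, ContDiffAt ℝ ∞ Jt y := by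
    filter_upwards [hin] with y hy
    have h1 : ContDiffAt ℝ ∞ J (p + T y) := hJ.contDiffAt (hU.mem_nhds hy)
    have h2 : ContDiffAt ℝ ∞ (fun y => J (p + T y)) y := h1.comp y hmap.contDiffAt
    exact (contDiffAt_const.mul h2).mul contDiffAt_const
  have hJ0 : Jt 0 = Iop := by
    refine ContinuousLinearMap.ext fun x => ?_
    simp only [Jt, map_zero, add_zero, clm_mul_apply,
      ContinuousLinearEquiv.coe_coe, Iop_apply]
    rw [← hT, T.symm_apply_apply]
  have hsq : ∀ᶠ y in 𝓝 0, Jt y * Jt y = -1 := by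
    filter_upwards [hin] with y hy
    refine ContinuousLinearMap.ext fun x => ?_
    simp [Jt, hJ2 _ hy]
  obtain ⟨B, hB, hB0, hBr⟩ := cayley hJt hJ0 hsq
  let χ : ContDiffBump (0 : VV) := ⟨1 / 2, 5 / 8, by norm_num, by norm_num⟩
  let F : ℝ × VV → (VV →L[ℝ] VV) := fun q => χ q.2 • B (q.1 • q.2)
  have hF : ContDiff ℝ ∞ F := by
    have h1 : ContDiff ℝ ∞ (fun q : ℝ × VV => χ q.2) := χ.contDiff.comp contDiff_snd
    have h2 : ContDiff ℝ ∞ (fun q : ℝ × VV => B (q.1 • q.2)) :=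
      hB.comp (contDiff_fst.smul contDiff_snd)
    exact h1.smul h2
  have hF0 : ∀ x, F (0, x) = 0 := by
    intro x
    have h1 : B ((0 : ℝ) • x) = 0 := by rw [zero_smul, hB0]
    change χ x • B ((0 : ℝ) • x) = 0
    rw [h1]
    exact smul_zero (A := VV →L[ℝ] VV) (χ x)
  have hFs : ∀ ρ x, 5 / 8 < ‖x‖ → F (ρ, x) = 0 := by
    intro ρ x hx
    change χ x • B (ρ • x) = 0
    have h1 : χ x = 0 := χ.zero_of_le_dist (by rw [dist_zero_right]; exact hx.le)
    rw [h1]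
    exact zero_smul ℝ (B (ρ • x))
  have hsmall := smallC2_of hF hF0 hFs eps0_pos
  have hboth : ∀ᶠ ρ in 𝓝 (0 : ℝ), ∀ x ∈ closedBall (0 : VV) 1, p + T (ρ • x) ∈ U ∧
      ∀ a b : VV, a + I • b = B (ρ • x) (a - I • b) → Jt (ρ • x) a = b := by
    apply (isCompact_closedBall (0 : VV) 1).eventually_forall_of_forall_eventually
      (P := fun ρ x => p + T (ρ • x) ∈ U ∧
      ∀ a b : VV, a + I • b = B (ρ • x) (a - I • b) → Jt (ρ • x) a = b)
    intro y _
    have hc : Tendsto (fun z : ℝ × VV => z.1 • z.2) (𝓝 (0, y)) (𝓝 0) := by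
      have : Continuous (fun z : ℝ × VV => z.1 • z.2) := by fun_prop
      simpa using this.tendsto (0, y)
    exact hc.eventually (hin.and hBr)
  filter_upwards [hsmall.filter_mono nhdsWithin_le_nhds, hboth.filter_mono nhdsWithin_le_nhds,
    self_mem_nhdsWithin] with ρ h1 h2 hρ
  obtain ⟨u, hu1, hu2, hu3⟩ := discs h1 (fun x hx => hFs ρ x (by linarith))
  refine ⟨u, hu1, hu2, fun w hw => ?_⟩
  obtain ⟨D, hD1, hD2, hD3, hD4⟩ := hu3 w
  refine ⟨D, hD1, hD2, hD3, fun z hz => ?_⟩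
  have hn : ‖(z, w) + u (z, w)‖ ≤ 1 / 2 := by
    refine (norm_add_le _ _).trans ?_
    have e1 : ‖((z, w) : VV)‖ ≤ 3 / 8 := by
      rw [Prod.norm_def]
      exact max_le hz hw
    linarith [hu1 (z, w)]
  obtain ⟨h3, h4⟩ := h2 ((z, w) + u (z, w)) (by
    rw [mem_closedBall_zero_iff]; linarith)
  refine ⟨h3, ?_⟩
  have h5 := hD4 z (by linarith)
  simp only [F] at h5
  rw [χ.one_of_mem_closedBall (by rw [mem_closedBall_zero_iff]; exact hn)] at h5
  have h5' : D z 1 + I • D z I = B (ρ • ((z, w) + u (z, w))) (D z 1 - I • D z I) :=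
    h5.trans (one_smul ℝ _)
  have h6 := h4 _ _ h5'
  rw [← h6]
  simp [Jt]

end Scaling
end HartogsAux

open Complex Metric
set_option linter.unusedSectionVars false

namespace HartogsAux
open MeasureTheory Filter Topology
open scoped ContDiff

section Bounded

variable {W : Type} [NormedAddCommGroup W] [NormedSpace ℝ W] [NormedSpace ℂ W]
  [IsScalarTower ℝ ℂ W] [CompleteSpace W]

lemma disc_estimate : ∃ CT : ℝ, ∀ (f : ℂ → W) (κ M0 : ℝ), ContDiffOn ℝ 1 f (ball 0 (3 / 8)) →
    0 ≤ κ → C0 * κ ≤ 1 / 2 →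
    (∀ z, ‖z‖ < 3 / 8 → ‖fderiv ℝ f z 1 + I • fderiv ℝ f z I‖ ≤ κ * ‖f z‖) →
    (∀ z, 1 / 4 ≤ ‖z‖ → ‖z‖ ≤ 5 / 16 → ‖f z‖ ≤ M0) →
    ∀ z, ‖z‖ ≤ 1 / 4 → ‖f z‖ ≤ CT * M0 := by
  let θ : ContDiffBump (0 : ℂ) := ⟨1 / 4, 5 / 16, by norm_num, by norm_num⟩
  have hθs : ContDiff ℝ 1 (θ : ℂ → ℝ) := θ.contDiff (n := 1)
  have hθc : Continuous (fderiv ℝ (θ : ℂ → ℝ)) := hθs.continuous_fderiv (by simp)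
  obtain ⟨C1, hC1⟩ := (θ.hasCompactSupport.fderiv ℝ).exists_bound_of_continuous hθc
  have hC10 : 0 ≤ C1 := (norm_nonneg _).trans (hC1 0)
  have hC := C0_ge
  refine ⟨4 * C0 * C1, fun f κ M0 hf hκ hκ' hd hM z0 hz0 => ?_⟩
  have hM0 : 0 ≤ M0 := (norm_nonneg _).trans (hM (1 / 4) (by norm_num) (by norm_num))
  have hθ0 : ∀ z : ℂ, 5 / 16 < ‖z‖ → θ z = 0 := by
    intro z hz
    apply θ.zero_of_le_dist
    rw [dist_zero_right]
    exact hz.le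
  have hθ' : ∀ z : ℂ, (‖z‖ < 1 / 4 ∨ 5 / 16 < ‖z‖) → fderiv ℝ (θ : ℂ → ℝ) z = 0 := by
    intro z hz
    rcases hz with hz | hz
    · have : (θ : ℂ → ℝ) =ᶠ[𝓝 z] fun _ => 1 := by
        filter_upwards [(isOpen_lt continuous_norm continuous_const).mem_nhds hz] with y hy
        apply θ.one_of_mem_closedBall
        rw [mem_closedBall_zero_iff]
        exact le_of_lt hy
      rw [this.fderiv_eq]; simp
    · have : (θ : ℂ → ℝ) =ᶠ[𝓝 z] fun _ => 0 := by
        filter_upwards [(isOpen_lt continuous_const continuous_norm).mem_nhds hz] with y hy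
        exact hθ0 y hy
      rw [this.fderiv_eq]; simp
  let u : ℂ → W := fun z => θ z • f z
  have hzero : ∀ z : ℂ, 5 / 16 < ‖z‖ → u =ᶠ[𝓝 z] fun _ => 0 := by
    intro z hz
    filter_upwards [(isOpen_lt continuous_const continuous_norm).mem_nhds hz] with y hy
    simp only [u]
    rw [hθ0 y hy, zero_smul]
  have hu : ContDiff ℝ 1 u := by
    rw [contDiff_iff_contDiffAt]
    intro z
    rcases lt_or_ge ‖z‖ (3 / 8) with h | h
    · exact hθs.contDiffAt.smul (hf.contDiffAt (isOpen_ball.mem_nhds (by simpa using h)))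
    · exact contDiffAt_const.congr_of_eventuallyEq (hzero z (by linarith))
  have hus : ∀ z, 1 ≤ ‖z‖ → u z = 0 := fun z hz => (hzero z (by linarith)).self_of_nhds
  obtain ⟨zs, -, hzs⟩ := (isCompact_closedBall (0 : ℂ) 1).exists_isMaxOn ⟨0, by simp⟩
    hu.continuous.norm.continuousOn
  have hmax : ∀ z, ‖u z‖ ≤ ‖u zs‖ := by
    intro z
    by_cases hz : z ∈ closedBall (0 : ℂ) 1
    · exact hzs hz
    · rw [hus z, norm_zero]
      · exact norm_nonneg _
      · have : 1 < ‖z‖ := by simpa using hz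
        exact this.le
  have hdbar : ∀ z, ‖fderiv ℝ u z 1 + I • fderiv ℝ u z I‖ ≤ 2 * C1 * M0 + κ * ‖u zs‖ := by
    intro z
    have hnn : 0 ≤ 2 * C1 * M0 + κ * ‖u zs‖ := by positivity
    rcases lt_or_ge (5 / 16) ‖z‖ with h | h
    · rw [(hzero z h).fderiv_eq]
      simpa using hnn
    · have h38 : ‖z‖ < 3 / 8 := by linarith
      have hfd : HasFDerivAt f (fderiv ℝ f z) z :=
        ((hf.contDiffAt (isOpen_ball.mem_nhds (by simpa using h38))).differentiableAt
          (by simp)).hasFDerivAt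
      have hθd : HasFDerivAt (θ : ℂ → ℝ) (fderiv ℝ (θ : ℂ → ℝ) z) z :=
        (hθs.differentiable (by simp) z).hasFDerivAt
      have hud : fderiv ℝ u z = _ := HasFDerivAt.fderiv (f := u) (hθd.smul hfd)
      rw [hud]
      have e : (θ z • fderiv ℝ f z + (fderiv ℝ (θ : ℂ → ℝ) z).smulRight (f z)) 1 +
          I • (θ z • fderiv ℝ f z + (fderiv ℝ (θ : ℂ → ℝ) z).smulRight (f z)) I =
          (fderiv ℝ (θ : ℂ → ℝ) z 1 • f z + I • (fderiv ℝ (θ : ℂ → ℝ) z I • f z)) +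
          θ z • (fderiv ℝ f z 1 + I • fderiv ℝ f z I) := by
        simp only [_root_.add_apply, _root_.smul_apply, ContinuousLinearMap.smulRight_apply,
          smul_add]
        rw [smul_comm (θ z) I]
        abel
      rw [e]
      refine (norm_add_le _ _).trans (add_le_add ?_ ?_)
      · rcases lt_or_ge ‖z‖ (1 / 4) with h4 | h4
        · rw [hθ' z (Or.inl h4)]
          simp only [_root_.zero_apply, zero_smul, smul_zero, add_zero, norm_zero]
          positivity
        · have e1 : ‖fderiv ℝ (θ : ℂ → ℝ) z 1 • f z‖ ≤ C1 * M0 := by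
            rw [norm_smul]
            gcongr
            · refine ((fderiv ℝ (θ : ℂ → ℝ) z).le_opNorm 1).trans ?_
              rw [norm_one, mul_one]
              exact hC1 z
            · exact hM z h4 h
          have e2 : ‖I • (fderiv ℝ (θ : ℂ → ℝ) z I • f z)‖ ≤ C1 * M0 := by
            rw [norm_smul, norm_smul, norm_I, one_mul]
            gcongr
            · refine ((fderiv ℝ (θ : ℂ → ℝ) z).le_opNorm I).trans ?_
              rw [norm_I, mul_one]
              exact hC1 z
            · exact hM z h4 h
          refine (norm_add_le _ _).trans ?_
          linarith
      · rw [norm_smul]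
        calc ‖θ z‖ * ‖fderiv ℝ f z 1 + I • fderiv ℝ f z I‖ ≤ ‖θ z‖ * (κ * ‖f z‖) := by
              gcongr
              exact hd z h38
          _ = κ * ‖u z‖ := by
              simp only [u]
              rw [norm_smul]; ring
          _ ≤ _ := by
              gcongr
              exact hmax z
  have hp := pompeiu hu hus hdbar zs
  have h1 : C0 * κ * ‖u zs‖ ≤ 1 / 2 * ‖u zs‖ := by gcongr
  have h2 : ‖u zs‖ ≤ 4 * C0 * C1 * M0 := by nlinarith
  have h3 : u z0 = f z0 := by
    simp only [u]
    rw [θ.one_of_mem_closedBall (by rw [mem_closedBall_zero_iff]; exact hz0), one_smul]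
  rw [← h3]
  exact (hmax z0).trans h2

lemma solve_id_add {u : VV → VV} (hl : ∀ x y, ‖u x - u y‖ ≤ 1 / 8 * ‖x - y‖) (y : VV) :
    ∃ q, q + u q = y := by
  have hc : ContractingWith (1 / 8) (fun q => y - u q) := by
    refine ⟨by norm_num, ?_⟩
    apply LipschitzWith.of_dist_le_mul
    intro a b
    rw [dist_eq_norm, dist_eq_norm, sub_sub_sub_cancel_left, norm_sub_rev]
    have := hl a b
    simpa using this
  have h := hc.fixedPoint_isFixedPt
  refine ⟨ContractingWith.fixedPoint _ hc, ?_⟩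
  have h2 : y - u (ContractingWith.fixedPoint _ hc) = ContractingWith.fixedPoint _ hc := h
  exact (sub_eq_iff_eq_add.1 h2).symm

lemma id_add_expand {u : VV → VV} (hl : ∀ x y, ‖u x - u y‖ ≤ 1 / 8 * ‖x - y‖) (x y : VV) :
    7 / 8 * ‖x - y‖ ≤ ‖(x + u x) - (y + u y)‖ := by
  have h1 := hl x y
  have e : x - y = ((x + u x) - (y + u y)) - (u x - u y) := by abel
  have h2 : ‖x - y‖ ≤ ‖(x + u x) - (y + u y)‖ + ‖u x - u y‖ := by
    conv_lhs => rw [e]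
    exact norm_sub_le _ _
  linarith

lemma bound_of_cont {V : Type} [NormedAddCommGroup V] [NormedSpace ℝ V]
    {Q : V → (W →L[ℝ] V →L[ℝ] W)} {p : V} (hQ : ContinuousAt Q p) :
    ∃ r > 0, ∃ K ≥ 0, ∀ x ∈ ball p r, ∀ w X, ‖Q x w X‖ ≤ K * ‖w‖ * ‖X‖ := by
  have h1 : Tendsto (fun x => ‖Q x‖) (𝓝 p) (𝓝 ‖Q p‖) :=
    ((continuous_norm (E := W →L[ℝ] V →L[ℝ] W)).tendsto (Q p)).comp hQ
  have h2 : ∀ᶠ x in 𝓝 p, ‖Q x‖ < ‖Q p‖ + 1 := h1.eventually_lt_const (by linarith)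
  obtain ⟨r, hr, h⟩ := Metric.eventually_nhds_iff_ball.1 h2
  refine ⟨r, hr, ‖Q p‖ + 1, by positivity, fun x hx w X => ?_⟩
  refine ((Q x).le_opNorm₂ w X).trans ?_
  have := (h x hx).le
  gcongr

lemma bounded_near {U : Set VV} (hU : IsOpen U) {p : VV} (hp : p ∈ U) {J : VV → (VV →L[ℝ] VV)}
    (hJ : ContDiffOn ℝ ∞ J U) (hJ2 : ∀ x ∈ U, ∀ X, J x (J x X) = -X)
    {F : VV → W} (hF : ContDiffOn ℝ 1 F (U \ {p}))
    {Q : VV → (W →L[ℝ] VV →L[ℝ] W)} (hQ : ContinuousOn Q U)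
    (heq : ∀ x ∈ U \ {p}, ∀ X, fderiv ℝ F x (J x X) = I • fderiv ℝ F x X + Q x (F x) X) :
    ∃ M : ℝ, ∀ᶠ x in 𝓝[≠] p, ‖F x‖ ≤ M := by
  obtain ⟨CT, hCT⟩ := disc_estimate (W := W)
  obtain ⟨T, -, hT⟩ := exists_discs hU hp hJ hJ2
  have hC := C0_ge
  have hVo : IsOpen (U \ {p}) := hU.sdiff isClosed_singleton
  have hFa : ∀ x ∈ U \ {p}, ContDiffAt ℝ 1 F x := fun x hx => hF.contDiffAt (hVo.mem_nhds hx)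
  -- bound for Q
  obtain ⟨r1, hr1, K, hK0, hK⟩ := bound_of_cont (V := VV) (W := W) (Q := Q) (p := p)
    (hQ.continuousAt (hU.mem_nhds hp))
  set nT := ‖(T : VV →L[ℝ] VV)‖ with hnT
  have hTn : ∀ x, ‖T x‖ ≤ nT * ‖x‖ := fun x => (T : VV →L[ℝ] VV).le_opNorm x
  have hnT0 : 0 ≤ nT := norm_nonneg _
  -- choice of the scale
  have hs1 : ∀ᶠ ρ in 𝓝[>] (0 : ℝ), ρ * nT < r1 := by
    have : ContinuousAt (fun ρ : ℝ => ρ * nT) 0 := by fun_prop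
    exact (this.eventually_lt_const (by simpa using hr1)).filter_mono nhdsWithin_le_nhds
  have hs2 : ∀ᶠ ρ in 𝓝[>] (0 : ℝ), C0 * (2 * K * nT * ρ) < 1 / 2 := by
    have : ContinuousAt (fun ρ : ℝ => C0 * (2 * K * nT * ρ)) 0 := by fun_prop
    exact (this.eventually_lt_const (by simp)).filter_mono nhdsWithin_le_nhds
  obtain ⟨ρ, ⟨⟨⟨u, hu1, hu2, hu3⟩, h1⟩, h2⟩, hρ⟩ :=
    (((hT.and hs1).and hs2).and self_mem_nhdsWithin).exists
  have hρ0 : 0 < ρ := hρ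
  have huc : Continuous u := by
    have : LipschitzWith (1 / 8) u := by
      apply LipschitzWith.of_dist_le_mul
      intro a b
      rw [dist_eq_norm, dist_eq_norm]
      simpa using hu2 a b
    exact this.continuous
  let Ψ : VV → VV := fun q => p + T (ρ • (q + u q))
  have hΨc : Continuous Ψ := by
    have := T.continuous
    fun_prop
  obtain ⟨q0, hq0⟩ := solve_id_add hu2 0
  have hq0n : ‖q0‖ ≤ 1 / 8 := by
    have : q0 = - u q0 := eq_neg_of_add_eq_zero_left hq0
    rw [this, norm_neg]
    exact hu1 q0
  have hΨp : ∀ q, Ψ q = p → q = q0 := by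
    intro q hq
    have h3 : T (ρ • (q + u q)) = 0 := add_eq_left.1 hq
    have h4 : ρ • (q + u q) = 0 := T.map_eq_zero_iff.1 h3
    have h5 : q + u q = 0 := (smul_eq_zero.1 h4).resolve_left hρ0.ne'
    have h6 := id_add_expand hu2 q q0
    rw [h5, hq0, sub_zero, norm_zero] at h6
    have h7 : ‖q - q0‖ = 0 := le_antisymm (by linarith) (norm_nonneg _)
    exact sub_eq_zero.1 (norm_eq_zero.1 h7)
  have hΨU : ∀ z w, ‖z‖ ≤ 3 / 8 → ‖w‖ ≤ 3 / 8 → Ψ (z, w) ∈ U := by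
    intro z w hz hw
    obtain ⟨D, -, -, -, hD⟩ := hu3 w hw
    exact (hD z hz).1
  have hΨb : ∀ z w, ‖z‖ ≤ 3 / 8 → ‖w‖ ≤ 3 / 8 → Ψ (z, w) ∈ ball p r1 := by
    intro z w hz hw
    have e1 : ‖((z, w) : VV)‖ ≤ 3 / 8 := by
      rw [Prod.norm_def]
      exact max_le hz hw
    have e2 : ‖(z, w) + u (z, w)‖ ≤ 1 := (norm_add_le _ _).trans (by linarith [hu1 (z, w)])
    rw [mem_ball, dist_eq_norm]
    simp only [Ψ, add_sub_cancel_left]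
    refine (hTn _).trans_lt ?_
    rw [norm_smul, Real.norm_eq_abs, abs_of_pos hρ0]
    have : nT * (ρ * ‖(z, w) + u (z, w)‖) ≤ nT * (ρ * 1) := by gcongr
    linarith
  -- bound on the annulus
  obtain ⟨M0, hM0⟩ : ∃ M0, ∀ z w, 1 / 4 ≤ ‖z‖ → ‖z‖ ≤ 5 / 16 → ‖w‖ ≤ 1 / 4 →
      ‖F (Ψ (z, w))‖ ≤ M0 := by
    let S : Set VV := {q | 1 / 4 ≤ ‖q.1‖ ∧ ‖q.1‖ ≤ 5 / 16 ∧ ‖q.2‖ ≤ 1 / 4}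
    have hS : IsCompact S := by
      apply (isCompact_closedBall (0 : VV) 1).of_isClosed_subset
      · apply IsClosed.inter
        · exact isClosed_le continuous_const (continuous_norm.comp continuous_fst)
        · apply IsClosed.inter
          · exact isClosed_le (continuous_norm.comp continuous_fst) continuous_const
          · exact isClosed_le (continuous_norm.comp continuous_snd) continuous_const
      · intro q hq
        rw [mem_closedBall_zero_iff, Prod.norm_def]
        exact max_le (by linarith [hq.2.1]) (by linarith [hq.2.2])
    have hc : ContinuousOn (fun q => F (Ψ q)) S := by
      intro q hq
      have hqU : Ψ q ∈ U \ {p} := by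
        refine ⟨hΨU q.1 q.2 (by linarith [hq.2.1]) (by linarith [hq.2.2]), ?_⟩
        intro hqp
        have := hΨp q hqp
        have h8 := hq.1
        rw [this] at h8
        have h9 : ‖q0.1‖ ≤ ‖q0‖ := norm_fst_le q0
        linarith
      exact ((hFa _ hqU).continuousAt.comp hΨc.continuousAt).continuousWithinAt
    obtain ⟨M0, h⟩ := hS.exists_bound_of_continuousOn hc
    exact ⟨M0, fun z w h1 h2 h3 => h (z, w) ⟨h1, h2, h3⟩⟩
  -- bound on good discs
  have hgood : ∀ z w, ‖z‖ ≤ 1 / 4 → ‖w‖ ≤ 1 / 4 → w ≠ q0.2 → ‖F (Ψ (z, w))‖ ≤ CT * M0 := by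
    intro z w hz hw hw0
    obtain ⟨D, hD1, hD2, hD3, hD4⟩ := hu3 w (by linarith)
    have hv : ContDiff ℝ 1 (fun z => (z, w) + u (z, w)) :=
      contDiff_one_iff_hasFDerivAt.2 ⟨D, hD2, hD1⟩
    have hΨd : ∀ z, HasFDerivAt (fun z => Ψ (z, w)) ((T : VV →L[ℝ] VV).comp (ρ • D z)) z := by
      intro z
      have := (T : VV →L[ℝ] VV).hasFDerivAt.comp z ((hD1 z).const_smul ρ)
      exact this.const_add p
    have hΨs : ContDiff ℝ 1 (fun z => Ψ (z, w)) :=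
      contDiff_const.add (T.contDiff.comp (hv.const_smul ρ))
    have hmem : ∀ z, ‖z‖ ≤ 3 / 8 → Ψ (z, w) ∈ U \ {p} := by
      intro z hz
      refine ⟨hΨU z w hz (by linarith), fun h => hw0 ?_⟩
      have := hΨp _ h
      rw [← this]
    refine hCT (fun z => F (Ψ (z, w))) (2 * K * nT * ρ) M0 ?_ (by positivity) h2.le ?_
      (fun z h1 h2 => hM0 z w h1 h2 hw) z hz
    · intro z hz
      have hz' : ‖z‖ < 3 / 8 := by simpa using hz
      have := (hFa _ (hmem z hz'.le)).comp z hΨs.contDiffAt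
      exact this.contDiffWithinAt
    · intro z hz
      have hx := hmem z hz.le
      set x := Ψ (z, w) with hxdef
      have hFd : HasFDerivAt F (fderiv ℝ F x) x := ((hFa _ hx).differentiableAt (by simp)).hasFDerivAt
      have hcd := hFd.comp z (hΨd z)
      have hfd : fderiv ℝ (fun z => F (Ψ (z, w))) z = _ := HasFDerivAt.fderiv hcd
      rw [hfd]
      simp only [ContinuousLinearMap.comp_apply, _root_.smul_apply, map_smul,
        ContinuousLinearEquiv.coe_coe]
      have hJx : J x (T (D z 1)) = T (D z I) := (hD4 z hz.le).2
      rw [← hJx, heq x hx]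
      have e : ρ • fderiv ℝ F x (T (D z 1)) +
          I • ρ • (I • fderiv ℝ F x (T (D z 1)) + Q x (F x) (T (D z 1))) =
          ρ • (I • Q x (F x) (T (D z 1))) := by
        rw [smul_comm I ρ, smul_add, smul_smul, I_mul_I, neg_smul, one_smul, ← smul_add]
        congr 1
        abel
      rw [e, norm_smul, norm_smul, norm_I, one_mul, Real.norm_eq_abs, abs_of_pos hρ0]
      have b1 : ‖D z 1‖ ≤ 2 := by
        refine ((D z).le_opNorm 1).trans ?_
        rw [norm_one, mul_one]
        exact hD3 z
      have b2 : ‖T (D z 1)‖ ≤ nT * 2 := (hTn _).trans (by gcongr)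
      have b4 : ‖Q x (F x) (T (D z 1))‖ ≤ K * ‖F x‖ * (nT * 2) :=
        (hK x (hΨb z w hz.le (by linarith)) _ _).trans (by gcongr)
      calc ρ * ‖Q x (F x) (T (D z 1))‖ ≤ ρ * (K * ‖F x‖ * (nT * 2)) := by gcongr
        _ = _ := by ring
  -- conclusion
  refine ⟨CT * M0, ?_⟩
  have hy : ∀ᶠ x in 𝓝 p, ‖ρ⁻¹ • T.symm (x - p)‖ < 1 / 32 := by
    have : Continuous (fun x => ‖ρ⁻¹ • T.symm (x - p)‖) := by
      have := T.symm.continuous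
      fun_prop
    apply this.continuousAt.eventually_lt_const
    simp
  have hyU : ∀ᶠ x in 𝓝 p, x ∈ U := hU.mem_nhds hp
  filter_upwards [hy.filter_mono nhdsWithin_le_nhds, hyU.filter_mono nhdsWithin_le_nhds,
    self_mem_nhdsWithin] with x hx hxU hxp
  obtain ⟨q, hq⟩ := solve_id_add hu2 (ρ⁻¹ • T.symm (x - p))
  have hΨq : Ψ q = x := by
    simp only [Ψ]
    rw [hq, smul_inv_smul₀ hρ0.ne', T.apply_symm_apply]
    abel
  have hqn : ‖q‖ < 1 / 4 := by
    have h6 := id_add_expand hu2 q q0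
    rw [hq, hq0, sub_zero] at h6
    have h7 : ‖q‖ ≤ ‖q - q0‖ + ‖q0‖ := by
      have := norm_add_le (q - q0) q0
      simpa using this
    linarith
  have hqz : ‖q.1‖ < 1 / 4 := (norm_fst_le q).trans_lt hqn
  have hqw : ‖q.2‖ < 1 / 4 := (norm_snd_le q).trans_lt hqn
  by_cases hw : q.2 = q0.2
  · have hcont : ContinuousAt (fun w => ‖F (Ψ (q.1, w))‖) q.2 := by
      have h8 : ContinuousAt (fun w : ℂ => Ψ (q.1, w)) q.2 := by fun_prop
      have h9 : ContinuousAt F (Ψ (q.1, q.2)) := by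
        have : Ψ (q.1, q.2) = x := hΨq
        rw [this]
        exact (hFa x ⟨hxU, hxp⟩).continuousAt
      exact (ContinuousAt.comp (g := F) (f := fun w : ℂ => Ψ (q.1, w)) (x := q.2) h9 h8).norm
    have hlim := hcont.tendsto.mono_left (nhdsWithin_le_nhds (s := {q.2}ᶜ))
    have : ‖F x‖ = ‖F (Ψ (q.1, q.2))‖ := by rw [← hΨq]
    rw [this]
    apply le_of_tendsto hlim
    have h10 : ∀ᶠ w in 𝓝 q.2, ‖w‖ < 1 / 4 := continuous_norm.continuousAt.eventually_lt_const hqw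
    filter_upwards [h10.filter_mono nhdsWithin_le_nhds, self_mem_nhdsWithin] with w h11 h12
    exact hgood _ _ hqz.le h11.le (by rw [← hw]; exact h12)
  · rw [← hΨq]
    exact hgood q.1 q.2 hqz.le hqw.le hw

end Bounded
end HartogsAux

open Complex Metric
set_option linter.unusedSectionVars false

namespace HartogsAux
open MeasureTheory Filter Topology
open scoped ContDiff

set_option synthInstance.maxHeartbeats 400000
set_option maxSynthPendingDepth 4

section Prolong

lemma exists_bilin {V A B C : Type} [NormedAddCommGroup V] [NormedSpace ℝ V]
    [NormedAddCommGroup A] [NormedSpace ℝ A] [NormedAddCommGroup B] [NormedSpace ℝ B]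
    [NormedAddCommGroup C] [NormedSpace ℝ C] [FiniteDimensional ℝ A] [FiniteDimensional ℝ B]
    {U : Set V} (q : V → A → B → C)
    (h1 : ∀ x a a' b, q x (a + a') b = q x a b + q x a' b)
    (h2 : ∀ x (r : ℝ) a b, q x (r • a) b = r • q x a b)
    (h3 : ∀ x a b b', q x a (b + b') = q x a b + q x a b')
    (h4 : ∀ x (r : ℝ) a b, q x a (r • b) = r • q x a b)
    (hs : ∀ a b, ContDiffOn ℝ ∞ (fun x => q x a b) U) :
    ∃ Q : V → (A →L[ℝ] B →L[ℝ] C), ContDiffOn ℝ ∞ Q U ∧ ∀ x a b, Q x a b = q x a b := by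
  let Q : V → (A →L[ℝ] B →L[ℝ] C) := fun x => LinearMap.toContinuousLinearMap
    { toFun := fun a => LinearMap.toContinuousLinearMap
        { toFun := fun b => q x a b
          map_add' := fun b b' => h3 x a b b'
          map_smul' := fun r b => h4 x r a b }
      map_add' := fun a a' => by
        refine ContinuousLinearMap.ext fun b => ?_
        exact h1 x a a' b
      map_smul' := fun r a => by
        refine ContinuousLinearMap.ext fun b => ?_
        exact h2 x r a b }
  refine ⟨Q, ?_, fun x a b => rfl⟩
  rw [contDiffOn_clm_apply]
  intro a
  rw [contDiffOn_clm_apply]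
  intro b
  exact hs a b

variable {V : Type} [NormedAddCommGroup V] [NormedSpace ℝ V] [FiniteDimensional ℝ V]
variable {W : Type} [NormedAddCommGroup W] [NormedSpace ℝ W] [NormedSpace ℂ W]
  [IsScalarTower ℝ ℂ W] [FiniteDimensional ℝ W]

lemma prolong {U : Set V} (hU : IsOpen U) {p : V} {J : V → (V →L[ℝ] V)}
    (hJ : ContDiffOn ℝ ∞ J U)
    {F : V → W} (hF : ContDiffOn ℝ ∞ F (U \ {p}))
    {Q : V → (W →L[ℝ] V →L[ℝ] W)} (hQ : ContDiffOn ℝ ∞ Q U)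
    (heq : ∀ x ∈ U \ {p}, ∀ X, fderiv ℝ F x (J x X) = I • fderiv ℝ F x X + Q x (F x) X) :
    ∃ Q' : V → ((W × (V →L[ℝ] W)) →L[ℝ] V →L[ℝ] (W × (V →L[ℝ] W))), ContDiffOn ℝ ∞ Q' U ∧
      ContDiffOn ℝ ∞ (fun x => (F x, fderiv ℝ F x)) (U \ {p}) ∧
      ∀ x ∈ U \ {p}, ∀ X, fderiv ℝ (fun x => (F x, fderiv ℝ F x)) x (J x X) =
        I • fderiv ℝ (fun x => (F x, fderiv ℝ F x)) x X + Q' x (F x, fderiv ℝ F x) X := by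
  have hVo : IsOpen (U \ {p}) := hU.sdiff isClosed_singleton
  have hDF : ContDiffOn ℝ ∞ (fderiv ℝ F) (U \ {p}) := hF.fderiv_of_isOpen hVo (by simp)
  have hDJ : ContDiffOn ℝ ∞ (fderiv ℝ J) U := hJ.fderiv_of_isOpen hU (by simp)
  have hDQ : ContDiffOn ℝ ∞ (fderiv ℝ Q) U := hQ.fderiv_of_isOpen hU (by simp)
  let q : V → (W × (V →L[ℝ] W)) → V → (W × (V →L[ℝ] W)) := fun x a X =>
    (Q x a.1 X, -(a.2.comp ((fderiv ℝ J x).flip X)) + (((fderiv ℝ Q x).flip a.1).flip X) +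
      ((Q x).flip X).comp a.2)
  obtain ⟨Q', hQ's, hQ'⟩ := exists_bilin (U := U) q
    (by
      intro x a a' b
      refine Prod.ext (by simp [q]) (ContinuousLinearMap.ext fun Y => ?_)
      simp [q]
      abel)
    (by
      intro x r a b
      refine Prod.ext (by simp [q]) (ContinuousLinearMap.ext fun Y => ?_)
      simp [q])
    (by
      intro x a b b'
      refine Prod.ext (by simp [q]) (ContinuousLinearMap.ext fun Y => ?_)
      simp [q]
      abel)
    (by
      intro x r a b
      refine Prod.ext (by simp [q]) (ContinuousLinearMap.ext fun Y => ?_)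
      simp [q])
    (by
      intro a X
      refine ContDiffOn.prodMk ?_ ?_
      · exact (hQ.clm_apply contDiffOn_const).clm_apply contDiffOn_const
      · rw [contDiffOn_clm_apply]
        intro Y
        refine ContDiffOn.add (ContDiffOn.add (ContDiffOn.neg ?_) ?_) ?_
        · exact a.2.contDiff.comp_contDiffOn
            ((hDJ.clm_apply contDiffOn_const).clm_apply contDiffOn_const)
        · exact ((hDQ.clm_apply contDiffOn_const).clm_apply contDiffOn_const).clm_apply
            contDiffOn_const
        · exact (hQ.clm_apply contDiffOn_const).clm_apply contDiffOn_const)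
  refine ⟨Q', hQ's, hF.prodMk hDF, fun x hx X => ?_⟩
  have hFd : HasFDerivAt F (fderiv ℝ F x) x :=
    ((hF.contDiffAt (hVo.mem_nhds hx)).differentiableAt (by simp)).hasFDerivAt
  have hDFd : HasFDerivAt (fderiv ℝ F) (fderiv ℝ (fderiv ℝ F) x) x :=
    ((hDF.contDiffAt (hVo.mem_nhds hx)).differentiableAt (by simp)).hasFDerivAt
  have hJd : HasFDerivAt J (fderiv ℝ J x) x :=
    ((hJ.contDiffAt (hU.mem_nhds hx.1)).differentiableAt (by simp)).hasFDerivAt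
  have hQd : HasFDerivAt Q (fderiv ℝ Q x) x :=
    ((hQ.contDiffAt (hU.mem_nhds hx.1)).differentiableAt (by simp)).hasFDerivAt
  have hsym : IsSymmSndFDerivAt ℝ F x :=
    (hF.contDiffAt (hVo.mem_nhds hx)).isSymmSndFDerivAt
      (by simp only [minSmoothness_of_isRCLikeNormedField]; exact WithTop.coe_le_coe.2 le_top)
  rw [HasFDerivAt.fderiv (hFd.prodMk hDFd), hQ']
  refine Prod.ext (heq x hx X) (ContinuousLinearMap.ext fun Y => ?_)
  -- differentiate the equation
  have hL := hDFd.clm_apply (hJd.clm_apply (hasFDerivAt_const X x))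
  have hR := ((hDFd.clm_apply (hasFDerivAt_const X x)).const_smul I).add
    ((hQd.clm_apply hFd).clm_apply (hasFDerivAt_const X x))
  have hLR : (fun x => fderiv ℝ F x (J x X)) =ᶠ[𝓝 x]
      ((I • fun x => fderiv ℝ F x X) + fun x => Q x (F x) X) := by
    filter_upwards [hVo.mem_nhds hx] with y hy
    exact heq y hy X
  have hu := (hL.congr_of_eventuallyEq hLR.symm).unique hR
  have hY := congrArg (fun T => T Y) hu
  simp at hY
  have s1 := hsym (J x X) Y
  have s2 := hsym X Y
  simp [q]
  rw [s1, s2, ← sub_eq_zero]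
  rw [← sub_eq_zero] at hY
  rw [← hY]
  abel

end Prolong
end HartogsAux

open Complex Metric
set_option linter.unusedSectionVars false

namespace HartogsAux
open MeasureTheory Filter Topology
open scoped ContDiff

set_option synthInstance.maxHeartbeats 400000
set_option maxSynthPendingDepth 4

section Limits

variable {V : Type} [NormedAddCommGroup V] [NormedSpace ℝ V]
variable {W : Type} [NormedAddCommGroup W] [NormedSpace ℝ W]

lemma seg_bound {p : V} {r M : ℝ} {F : V → W}
    (hd : ∀ x ∈ ball p r, x ≠ p → DifferentiableAt ℝ F x)
    (hb : ∀ x ∈ ball p r, x ≠ p → ‖fderiv ℝ F x‖ ≤ M) {x y : V} (hx : x ∈ ball p r)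
    (hy : y ∈ ball p r) (h : p ∉ segment ℝ x y) : ‖F y - F x‖ ≤ M * ‖y - x‖ := by
  have hsub : segment ℝ x y ⊆ ball p r := (convex_ball p r).segment_subset hx hy
  have hne : ∀ z ∈ segment ℝ x y, z ≠ p := fun z hz e => h (e ▸ hz)
  exact (convex_segment x y).norm_image_sub_le_of_norm_fderiv_le
    (fun z hz => hd z (hsub hz) (hne z hz)) (fun z hz => hb z (hsub hz) (hne z hz))
    (left_mem_segment ℝ x y) (right_mem_segment ℝ x y)

lemma hasFDerivAt_update [DecidableEq V] {p : V} {F : V → W} {c : W} {L : V →L[ℝ] W}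
    (hd : ∀ᶠ x in 𝓝[≠] p, DifferentiableAt ℝ F x)
    (hc : Tendsto F (𝓝[≠] p) (𝓝 c)) (hL : Tendsto (fderiv ℝ F) (𝓝[≠] p) (𝓝 L)) :
    HasFDerivAt (Function.update F p c) L p := by
  rw [hasFDerivAt_iff_isLittleO, Asymptotics.isLittleO_iff]
  intro ε hε
  have h1 : ∀ᶠ x in 𝓝[≠] p, ‖fderiv ℝ F x - L‖ < ε := by
    have := (tendsto_sub_nhds_zero_iff.2 hL).norm
    rw [norm_zero] at this
    exact this.eventually_lt_const hε
  obtain ⟨r, hr, h2⟩ := Metric.eventually_nhds_iff_ball.1 (eventually_nhdsWithin_iff.1 (hd.and h1))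
  filter_upwards [ball_mem_nhds p hr] with x hx
  by_cases hxp : x = p
  · subst hxp
    simp
  rw [Function.update_self, Function.update_of_ne hxp]
  have hG : ∀ y ∈ ball p r, y ≠ p → HasFDerivAt (fun y => F y - L y) (fderiv ℝ F y - L) y :=
    fun y hy hyp => (h2 y hy hyp).1.hasFDerivAt.sub L.hasFDerivAt
  have key : ∀ t ∈ Set.Ioo (0 : ℝ) 1,
      ‖(F x - L x) - (F (p + t • (x - p)) - L (p + t • (x - p)))‖ ≤ ε * ‖x - p‖ := by
    intro t ht
    have hyn : ‖(p + t • (x - p)) - p‖ ≤ ‖x - p‖ := by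
      rw [add_sub_cancel_left, norm_smul, Real.norm_eq_abs, abs_of_pos ht.1]
      exact mul_le_of_le_one_left (norm_nonneg _) ht.2.le
    have hxr : ‖x - p‖ < r := by simpa [dist_eq_norm] using hx
    have hy : p + t • (x - p) ∈ ball p r := by
      rw [mem_ball, dist_eq_norm]
      linarith
    have hseg : p ∉ segment ℝ (p + t • (x - p)) x := by
      rintro ⟨a, b, ha, hb, hab, e⟩
      have e2 : (a * t + b) • (x - p) = 0 := by
        have : a • (p + t • (x - p)) + b • x - (a + b) • p = 0 := by
          rw [e, hab, one_smul, sub_self]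
        rw [← this]
        module
      rcases smul_eq_zero.1 e2 with h | h
      · have h3 : 0 ≤ a * t := mul_nonneg ha ht.1.le
        have hb0 : b = 0 := by linarith
        have ha1 : a = 1 := by linarith
        rw [hb0, ha1] at h
        linarith [ht.1]
      · exact hxp (sub_eq_zero.1 h)
    have := seg_bound (M := ε) (F := fun y => F y - L y)
      (fun y hy hyp => (hG y hy hyp).differentiableAt)
      (fun y hy hyp => by rw [(hG y hy hyp).fderiv]; exact (h2 y hy hyp).2.le) hy hx hseg
    refine this.trans ?_
    gcongr
    have e3 : x - (p + t • (x - p)) = (1 - t) • (x - p) := by module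
    rw [e3, norm_smul, Real.norm_eq_abs, abs_of_pos (by linarith [ht.2])]
    exact mul_le_of_le_one_left (norm_nonneg _) (by linarith [ht.1])
  have hlim : Tendsto (fun t : ℝ => p + t • (x - p)) (𝓝[>] 0) (𝓝[≠] p) := by
    rw [tendsto_nhdsWithin_iff]
    constructor
    · have : Continuous (fun t : ℝ => p + t • (x - p)) := by fun_prop
      have h := this.tendsto 0
      simp only [zero_smul, add_zero] at h
      exact h.mono_left nhdsWithin_le_nhds
    · filter_upwards [self_mem_nhdsWithin] with t ht
      have ht : 0 < t := ht
      intro e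
      have : t • (x - p) = 0 := add_eq_left.1 e
      rcases smul_eq_zero.1 this with h | h
      · exact ht.ne' h
      · exact hxp (sub_eq_zero.1 h)
  have hLlim : Tendsto (fun y => L y) (𝓝[≠] p) (𝓝 (L p)) :=
    (L.continuous.tendsto p).mono_left nhdsWithin_le_nhds
  have hl2 := (tendsto_const_nhds (x := F x - L x)).sub ((hc.sub hLlim).comp hlim)
  have hl3 := hl2.norm
  have := le_of_tendsto hl3 (by
    filter_upwards [Ioo_mem_nhdsGT (zero_lt_one' ℝ)] with t ht
    exact key t ht)
  rw [map_sub]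
  have e : F x - c - (L x - L p) = F x - L x - (c - L p) := by abel
  rw [e]
  exact this

end Limits

section Cauchy
variable {W : Type} [NormedAddCommGroup W] [NormedSpace ℝ W] [CompleteSpace W]

lemma limit_exists {V : Type} [NormedAddCommGroup V] [NormedSpace ℝ V] [NormedSpace ℂ V]
    [IsScalarTower ℝ ℂ V] [Nontrivial V] {p : V} {F : V → W} {M : ℝ}
    (hd : ∀ᶠ x in 𝓝[≠] p, DifferentiableAt ℝ F x)
    (hb : ∀ᶠ x in 𝓝[≠] p, ‖fderiv ℝ F x‖ ≤ M) : ∃ c, Tendsto F (𝓝[≠] p) (𝓝 c) := by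
  obtain ⟨r, hr, h2⟩ := Metric.eventually_nhds_iff_ball.1 (eventually_nhdsWithin_iff.1 (hd.and hb))
  have : (𝓝[≠] p).NeBot := Module.punctured_nhds_neBot ℝ V p
  have hM : 0 ≤ M := by
    obtain ⟨x, hx⟩ := hb.exists
    exact (norm_nonneg _).trans hx
  have hsc : ∀ (t : ℝ) (x : V), t • x = (t : ℂ) • x := fun t x => by
    rw [← one_smul ℂ x, ← smul_assoc, smul_smul]; simp
  have key : ∀ δ, δ ≤ r → ∀ x y, x ∈ ball p δ → y ∈ ball p δ → x ≠ p → y ≠ p →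
      ‖F y - F x‖ ≤ M * (4 * δ) := by
    intro δ hδ x y hx hy hxp hyp
    have hdr : ∀ x ∈ ball p δ, x ≠ p → DifferentiableAt ℝ F x :=
      fun x hx hxp => (h2 x (ball_subset_ball hδ hx) hxp).1
    have hbr : ∀ x ∈ ball p δ, x ≠ p → ‖fderiv ℝ F x‖ ≤ M :=
      fun x hx hxp => (h2 x (ball_subset_ball hδ hx) hxp).2
    have hdist : ∀ x y, x ∈ ball p δ → y ∈ ball p δ → ‖y - x‖ ≤ 2 * δ := by
      intro x y hx hy
      have := dist_triangle_right y x p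
      rw [mem_ball] at hx hy
      rw [← dist_eq_norm]
      linarith
    have hδ0 : 0 < δ := pos_of_mem_ball hx
    by_cases hseg : p ∈ segment ℝ x y
    · obtain ⟨a, b, ha, hb, hab, e⟩ := hseg
      have e2 : a • (x - p) + b • (y - p) = 0 := by
        have : a • x + b • y - (a + b) • p = 0 := by rw [e, hab, one_smul, sub_self]
        rw [← this]
        module
      have hx0 : x - p ≠ 0 := sub_ne_zero.2 hxp
      have hy0 : y - p ≠ 0 := sub_ne_zero.2 hyp
      have hb0 : b ≠ 0 := by
        rintro rfl
        have : a = 1 := by linarith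
        rw [this, one_smul, zero_smul, add_zero] at e2
        exact hx0 e2
      have ha0 : a ≠ 0 := by
        rintro rfl
        have : b = 1 := by linarith
        rw [this, one_smul, zero_smul, zero_add] at e2
        exact hy0 e2
      have ey : y - p = (-(a / b)) • (x - p) := by
        have : b • (y - p) = (-a) • (x - p) := by
          rw [neg_smul]; exact eq_neg_of_add_eq_zero_right e2
        rw [← inv_smul_smul₀ hb0 (y - p), this, smul_smul]
        congr 1
        field_simp
      set z := p + I • (x - p) with hz
      have hzn : ‖z - p‖ = ‖x - p‖ := by simp [hz, norm_smul]
      have hzb : z ∈ ball p δ := by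
        rw [mem_ball, dist_eq_norm, hzn, ← dist_eq_norm]
        exact hx
      have h1 : p ∉ segment ℝ x z := by
        rintro ⟨s, t, hs, ht, hst, e'⟩
        have e3 : ((s : ℂ) + t * I) • (x - p) = 0 := by
          have : s • x + t • z - (s + t) • p = 0 := by rw [e', hst, one_smul, sub_self]
          rw [← this, hz, hsc, hsc, hsc]
          push_cast
          module
        rcases smul_eq_zero.1 e3 with h | h
        · have i1 := congrArg Complex.re h
          have i2 := congrArg Complex.im h
          simp at i1 i2
          linarith
        · exact hx0 h
      have h3 : p ∉ segment ℝ z y := by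
        rintro ⟨s, t, hs, ht, hst, e'⟩
        have e3 : ((s : ℂ) * I - t * (a / b)) • (x - p) = 0 := by
          have e5 : s • z + t • y - (s + t) • p = 0 := by rw [e', hst, one_smul, sub_self]
          have e6 : s • z + t • y - (s + t) • p = s • (z - p) + t • (y - p) := by module
          have e7 : z - p = I • (x - p) := by rw [hz]; abel
          rw [← e5, e6, ey, e7, hsc, hsc, hsc]
          push_cast
          module
        rcases smul_eq_zero.1 e3 with h | h
        · have i1 : t * (a / b) = 0 := by
            have := congrArg Complex.re h
            rw [← ofReal_div] at this
            simpa using this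
          have i2 : s = 0 := by
            have := congrArg Complex.im h
            rw [← ofReal_div] at this
            simpa using this
          have i3 : t = 0 := (mul_eq_zero.1 i1).resolve_right (div_ne_zero ha0 hb0)
          linarith
        · exact hx0 h
      have b1 := seg_bound hdr hbr hx hzb h1
      have b2 := seg_bound hdr hbr hzb hy h3
      have b3 : ‖F y - F x‖ ≤ ‖F y - F z‖ + ‖F z - F x‖ := norm_sub_le_norm_sub_add_norm_sub _ _ _
      have b4 := mul_le_mul_of_nonneg_left (hdist x z hx hzb) hM
      have b5 := mul_le_mul_of_nonneg_left (hdist z y hzb hy) hM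
      linarith
    · have b1 := seg_bound hdr hbr hx hy hseg
      have b4 := mul_le_mul_of_nonneg_left (hdist x y hx hy) hM
      have : 0 ≤ M * δ := by positivity
      linarith
  have hC : Cauchy (map F (𝓝[≠] p)) := by
    rw [Metric.cauchy_iff]
    refine ⟨inferInstance, fun ε hε => ?_⟩
    set δ := min r (ε / (4 * M + 1) / 2) with hδ
    have hδ0 : 0 < δ := by positivity
    refine ⟨F '' (ball p δ ∩ {p}ᶜ), image_mem_map (inter_mem (nhdsWithin_le_nhds
      (ball_mem_nhds p hδ0)) self_mem_nhdsWithin), ?_⟩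
    rintro _ ⟨x, hx, rfl⟩ _ ⟨y, hy, rfl⟩
    rw [dist_eq_norm]
    refine (key δ (min_le_left _ _) y x hy.1 hx.1 hy.2 hx.2).trans_lt ?_
    have h5 : δ ≤ ε / (4 * M + 1) / 2 := min_le_right _ _
    calc M * (4 * δ) ≤ (4 * M + 1) * δ := by nlinarith
      _ ≤ (4 * M + 1) * (ε / (4 * M + 1) / 2) := by gcongr
      _ = ε / 2 := by field_simp
      _ < ε := by linarith
  exact CompleteSpace.complete hC

end Cauchy
end HartogsAux

open Complex Metric
set_option linter.unusedSectionVars false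

namespace HartogsAux
open MeasureTheory Filter Topology
open scoped ContDiff

set_option synthInstance.maxHeartbeats 400000
set_option maxSynthPendingDepth 4

section Ext

lemma ext_step {V : Type} [NormedAddCommGroup V] [NormedSpace ℝ V] [DecidableEq V]
    {W : Type} [NormedAddCommGroup W] [NormedSpace ℝ W]
    {U : Set V} (hU : IsOpen U) {p : V} (hp : p ∈ U) {F : V → W}
    (hF : ContDiffOn ℝ ∞ F (U \ {p})) {n : ℕ} {c : W × (V →L[ℝ] W)}
    (hc : ContDiffAt ℝ n (Function.update (fun x => (F x, fderiv ℝ F x)) p c) p) :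
    ContDiffAt ℝ (n + 1 : ℕ) (Function.update F p c.1) p := by
  have hVo : IsOpen (U \ {p}) := hU.sdiff isClosed_singleton
  have hd : ∀ x ∈ U \ {p}, DifferentiableAt ℝ F x := fun x hx =>
    (hF.contDiffAt (hVo.mem_nhds hx)).differentiableAt (by simp)
  have hlim := continuousAt_update_same.1 hc.continuousAt
  have hlim1 : Tendsto F (𝓝[≠] p) (𝓝 c.1) := (continuous_fst.tendsto c).comp hlim
  have hlim2 : Tendsto (fderiv ℝ F) (𝓝[≠] p) (𝓝 c.2) := (continuous_snd.tendsto c).comp hlim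
  have hev : ∀ᶠ x in 𝓝[≠] p, DifferentiableAt ℝ F x := by
    filter_upwards [nhdsWithin_le_nhds (hU.mem_nhds hp), self_mem_nhdsWithin] with x h1 h2
    exact hd x ⟨h1, h2⟩
  have hp1 := hasFDerivAt_update hev hlim1 hlim2
  rw [Nat.cast_succ, contDiffAt_succ_iff_hasFDerivAt]
  refine ⟨fun x => (Function.update (fun x => (F x, fderiv ℝ F x)) p c x).2,
    ⟨U, hU.mem_nhds hp, fun x hx => ?_⟩, contDiff_snd.contDiffAt.comp p hc⟩
  by_cases hxp : x = p
  · subst hxp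
    simpa using hp1
  · beta_reduce
    rw [Function.update_of_ne hxp]
    refine (hd x ⟨hx, hxp⟩).hasFDerivAt.congr_of_eventuallyEq ?_
    filter_upwards [isOpen_compl_singleton.mem_nhds hxp] with y hy
    exact Function.update_of_ne hy _ _

open Classical in
lemma ext_n {U : Set VV} (hU : IsOpen U) {p : VV} (hp : p ∈ U) {J : VV → (VV →L[ℝ] VV)}
    (hJ : ContDiffOn ℝ ∞ J U) (hJ2 : ∀ x ∈ U, ∀ X, J x (J x X) = -X) (n : ℕ) :
    ∀ (W : Type) [NormedAddCommGroup W] [NormedSpace ℝ W] [NormedSpace ℂ W]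
    [IsScalarTower ℝ ℂ W] [FiniteDimensional ℝ W] (F : VV → W)
    (Q : VV → (W →L[ℝ] VV →L[ℝ] W)),
    ContDiffOn ℝ ∞ F (U \ {p}) → ContDiffOn ℝ ∞ Q U →
    (∀ x ∈ U \ {p}, ∀ X, fderiv ℝ F x (J x X) = I • fderiv ℝ F x X + Q x (F x) X) →
    ∃ c, ContDiffAt ℝ n (Function.update F p c) p := by
  have hVo : IsOpen (U \ {p}) := hU.sdiff isClosed_singleton
  have hev : ∀ᶠ x in 𝓝[≠] p, x ∈ U \ {p} := by
    filter_upwards [nhdsWithin_le_nhds (hU.mem_nhds hp), self_mem_nhdsWithin] with x h1 h2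
    exact ⟨h1, h2⟩
  induction n with
  | zero =>
    intro W _ _ _ _ _ F Q hF hQ heq
    obtain ⟨Q', h1, h2, h3⟩ := prolong hU hJ hF hQ heq
    have : CompleteSpace W := FiniteDimensional.complete ℝ W
    have : CompleteSpace (W × (VV →L[ℝ] W)) := FiniteDimensional.complete ℝ _
    obtain ⟨M, hM⟩ := bounded_near hU hp hJ hJ2 (h2.of_le (by simp)) h1.continuousOn h3
    have hM2 : ∀ᶠ x in 𝓝[≠] p, ‖fderiv ℝ F x‖ ≤ M := by
      filter_upwards [hM] with x hx
      exact (norm_snd_le _).trans hx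
    have hd : ∀ᶠ x in 𝓝[≠] p, DifferentiableAt ℝ F x := by
      filter_upwards [hev] with x hx
      exact (hF.contDiffAt (hVo.mem_nhds hx)).differentiableAt (by simp)
    obtain ⟨c, hc⟩ := limit_exists hd hM2
    refine ⟨c, ?_⟩
    rw [Nat.cast_zero, contDiffAt_zero]
    refine ⟨U, hU.mem_nhds hp, fun x hx => ?_⟩
    by_cases hxp : x = p
    · subst hxp
      exact (continuousAt_update_same.2 hc).continuousWithinAt
    · refine ContinuousAt.continuousWithinAt ?_
      rw [continuousAt_update_of_ne hxp]
      exact (hF.contDiffAt (hVo.mem_nhds ⟨hx, hxp⟩)).continuousAt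
  | succ n ih =>
    intro W _ _ _ _ _ F Q hF hQ heq
    obtain ⟨Q', h1, h2, h3⟩ := prolong hU hJ hF hQ heq
    obtain ⟨c, hc⟩ := ih (W × (VV →L[ℝ] W)) _ Q' h2 h1 h3
    exact ⟨c.1, ext_step hU hp hF hc⟩

open Classical in
lemma ext_smooth {U : Set VV} (hU : IsOpen U) {p : VV} (hp : p ∈ U) {J : VV → (VV →L[ℝ] VV)}
    (hJ : ContDiffOn ℝ ∞ J U) (hJ2 : ∀ x ∈ U, ∀ X, J x (J x X) = -X)
    (F : VV → ℂ) (Q : VV → (ℂ →L[ℝ] VV →L[ℝ] ℂ))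
    (hF : ContDiffOn ℝ ∞ F (U \ {p})) (hQ : ContDiffOn ℝ ∞ Q U)
    (heq : ∀ x ∈ U \ {p}, ∀ X, fderiv ℝ F x (J x X) = I * fderiv ℝ F x X + Q x (F x) X) :
    ∃ c, ContDiffAt ℝ ∞ (Function.update F p c) p := by
  have h := fun n => ext_n hU hp hJ hJ2 n ℂ F Q hF hQ heq
  have : (𝓝[≠] p).NeBot := Module.punctured_nhds_neBot ℝ VV p
  choose c hc using h
  have hlim : ∀ n, Tendsto F (𝓝[≠] p) (𝓝 (c n)) := fun n =>
    continuousAt_update_same.1 (hc n).continuousAt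
  refine ⟨c 0, contDiffAt_infty.2 fun n => ?_⟩
  rw [tendsto_nhds_unique (hlim 0) (hlim n)]
  exact hc n

end Ext
end HartogsAux

open Complex Metric
set_option linter.unusedSectionVars false

namespace HartogsAux
open MeasureTheory Filter Topology
open scoped ContDiff

set_option synthInstance.maxHeartbeats 400000
set_option maxSynthPendingDepth 4

section Algebra

variable {V : Type} [NormedAddCommGroup V] [NormedSpace ℝ V]

/-- The zero-order term of the first order system satisfied by the form. -/
def kk (β : V → V → ℝ) (j : V → V) (δ : V → V → V) (a b : V) (z w : ℂ) : ℝ :=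
  z.re * β (δ b a) a +
  z.im * (-β (δ (j b) a) a + β (δ a a) (j b) + β (j a) (δ a b) - β a (δ (j a) b) +
    β (δ (j a) a) b) +
  w.re * (-β (δ a b) b + β (δ b a) b - β a (δ b b)) +
  w.im * (β (δ (j a) b) b + β (δ b a) (j b) + β (j a) (δ b b))

/-- The form with complex coefficient `c` in the coframe `s1, s2`. -/
noncomputable def om (s1 s2 : V →L[ℝ] ℂ) (c : ℂ) (Y Z : V) : ℝ := (c * (s1 Y * s2 Z - s2 Y * s1 Z)).re

lemma alg_E1 {A : V →L[ℝ] V →L[ℝ] ℝ} {D : V →L[ℝ] V →L[ℝ] V →L[ℝ] ℝ} {j : V →L[ℝ] V}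
    {δ : V →L[ℝ] V →L[ℝ] V} (hj : ∀ X, j (j X) = -X)
    (hD : ∀ X Y Z, D X Y Z = - D X Z Y) (hAs : ∀ Y Z, A Y Z = - A Z Y)
    (hi : ∀ X Y Z, D X (j Y) Z + A (δ X Y) Z = D X Y (j Z) + A Y (δ X Z))
    (hii : ∀ X Y Z, D X (j Y) (j Z) + A (δ X Y) (j Z) + A (j Y) (δ X Z) = - D X Y Z)
    (hcl : ∀ X Y Z, D X Y Z - D Y X Z + D Z X Y = 0) (a b X : V) (z w : ℂ)
    (hX : X = z.re • a + z.im • j a + w.re • b + w.im • j b) :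
    D (j X) a b - D X (j a) b = kk (fun Y Z => A Y Z) j (fun X Y => δ X Y) a b z w := by
  have e1 : D (j a) a b - D a (j a) b = A (δ b a) a := by
    linarith [hcl (j a) a b, hi b a a, hD b a (j a), hAs a (δ b a)]
  have e2 : - D a a b - D (j a) (j a) b = -A (δ (j b) a) a + A (δ a a) (j b) + A (j a) (δ a b) -
      A a (δ (j a) b) + A (δ (j a) a) b := by
    linarith [hcl a (j a) (j b), hi (j b) a a, hii a a b, hi (j a) a b, hD (j b) a (j a),
      hAs a (δ (j b) a)]
  have e3 : D (j b) a b - D b (j a) b = -A (δ a b) b + A (δ b a) b - A a (δ b b) := by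
    linarith [hcl (j b) a b, hi a b b, hi b a b, hD b (j b) a, hD a b (j b), hAs b (δ a b)]
  have e4 : - D b a b - D (j b) (j a) b = A (δ (j a) b) b + A (δ b a) (j b) + A (j a) (δ b b) := by
    linarith [hcl b (j a) (j b), hii b a b, hD (j b) b (j a), hD (j a) b (j b), hi (j a) b b,
      hAs b (δ (j a) b)]
  have hE : D (j X) a b - D X (j a) b = z.re * (D (j a) a b - D a (j a) b) +
      z.im * (- D a a b - D (j a) (j a) b) + w.re * (D (j b) a b - D b (j a) b) +
      w.im * (- D b a b - D (j b) (j a) b) := by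
    subst hX
    simp only [map_add, map_smul, hj, map_neg, _root_.add_apply, _root_.smul_apply,
      _root_.neg_apply, smul_eq_mul, smul_neg]
    ring
  rw [hE, e1, e2, e3, e4, kk]

lemma alg_om {A : V →L[ℝ] V →L[ℝ] ℝ} {j : V →L[ℝ] V} (hj : ∀ X, j (j X) = -X)
    (hA : ∀ X, A X X = 0) (hAs : ∀ Y Z, A Y Z = - A Z Y)
    (hJ : ∀ Y Z, A (j Y) (j Z) = - A Y Z) (hJ1 : ∀ Y Z, A (j Y) Z = A Y (j Z))
    (a b : V) (s1 s2 : V →L[ℝ] ℂ)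
    (hX : ∀ X, X = (s1 X).re • a + (s1 X).im • j a + (s2 X).re • b + (s2 X).im • j b) (Y Z : V) :
    A Y Z = om s1 s2 ((A a b : ℂ) - I * (A (j a) b : ℂ)) Y Z := by
  have h1 : A a (j a) = 0 := by linarith [hJ1 a a, hAs (j a) a]
  have h2 : A b (j b) = 0 := by linarith [hJ1 b b, hAs (j b) b]
  have h3 : A (j a) a = 0 := by linarith [hJ1 a a, hAs (j a) a]
  have h4 : A (j b) b = 0 := by linarith [hJ1 b b, hAs (j b) b]
  have h5 : A b a = - A a b := hAs b a
  have h6 : A a (j b) = A (j a) b := (hJ1 a b).symm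
  have h7 : A (j b) a = - A (j a) b := by rw [hAs, h6]
  have h8 : A b (j a) = - A (j a) b := hAs _ _
  have h9 : A (j a) (j b) = - A a b := hJ a b
  have h10 : A (j b) (j a) = A a b := by rw [hJ, h5, neg_neg]
  have key : A Y Z = A ((s1 Y).re • a + (s1 Y).im • j a + (s2 Y).re • b + (s2 Y).im • j b)
      ((s1 Z).re • a + (s1 Z).im • j a + (s2 Z).re • b + (s2 Z).im • j b) := by
    rw [← hX Y, ← hX Z]
  rw [key]
  simp only [map_add, map_smul, _root_.add_apply, _root_.smul_apply, smul_eq_mul, h1, h2, h3, h4,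
    h5, h6, h7, h8, h9, h10, hA, om]
  simp
  ring

end Algebra

section Equation

variable {V : Type} [NormedAddCommGroup V] [NormedSpace ℝ V] [FiniteDimensional ℝ V]

lemma om_smooth {U : Set V} {s1 s2 : V → (V →L[ℝ] ℂ)} (h1 : ContDiffOn ℝ ∞ s1 U)
    (h2 : ContDiffOn ℝ ∞ s2 U) {c : V → ℂ} {Y Z : V → V} (hc : ContDiffOn ℝ ∞ c U)
    (hY : ContDiffOn ℝ ∞ Y U) (hZ : ContDiffOn ℝ ∞ Z U) :
    ContDiffOn ℝ ∞ (fun x => om (s1 x) (s2 x) (c x) (Y x) (Z x)) U := by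
  refine Complex.reCLM.contDiff.comp_contDiffOn (hc.mul (ContDiffOn.sub ?_ ?_))
  · exact (h1.clm_apply hY).mul (h2.clm_apply hZ)
  · exact (h2.clm_apply hY).mul (h1.clm_apply hZ)

lemma equation {U : Set V} (hU : IsOpen U) {p : V} {J : V → (V →L[ℝ] V)}
    (hJ : ContDiffOn ℝ ∞ J U) (hJ2 : ∀ x ∈ U, ∀ X, J x (J x X) = -X)
    {α : V → (V →L[ℝ] V →L[ℝ] ℝ)} (hα : ContDiffOn ℝ ∞ α (U \ {p}))
    (hα0 : ∀ x ∈ U \ {p}, ∀ X, α x X X = 0)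
    (hαJ : ∀ x ∈ U \ {p}, ∀ X Y, α x (J x X) (J x Y) = - α x X Y)
    (hcl : ∀ x ∈ U \ {p}, ∀ X Y Z,
      fderiv ℝ α x X Y Z - fderiv ℝ α x Y X Z + fderiv ℝ α x Z X Y = 0)
    {a b : V} {s1 s2 : V → (V →L[ℝ] ℂ)} (hs1 : ContDiffOn ℝ ∞ s1 U) (hs2 : ContDiffOn ℝ ∞ s2 U)
    (hs : ∀ x ∈ U, ∀ X, X = (s1 x X).re • a + (s1 x X).im • J x a + (s2 x X).re • b +
      (s2 x X).im • J x b) :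
    ∃ (f : V → ℂ) (Q : V → (ℂ →L[ℝ] V →L[ℝ] ℂ)), ContDiffOn ℝ ∞ f (U \ {p}) ∧
      ContDiffOn ℝ ∞ Q U ∧
      (∀ x ∈ U \ {p}, ∀ X, fderiv ℝ f x (J x X) = I * fderiv ℝ f x X + Q x (f x) X) ∧
      ∀ x ∈ U \ {p}, ∀ Y Z, α x Y Z = om (s1 x) (s2 x) (f x) Y Z := by
  have hVo : IsOpen (U \ {p}) := hU.sdiff isClosed_singleton
  have hDJ : ContDiffOn ℝ ∞ (fderiv ℝ J) U := hJ.fderiv_of_isOpen hU (by simp)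
  have hαs : ∀ x ∈ U \ {p}, ∀ Y Z, α x Y Z = - α x Z Y := by
    intro x hx Y Z
    have := hα0 x hx (Y + Z)
    simp only [map_add, _root_.add_apply, hα0 x hx] at this
    linarith
  have hαJ1 : ∀ x ∈ U \ {p}, ∀ Y Z, α x (J x Y) Z = α x Y (J x Z) := by
    intro x hx Y Z
    have := hαJ x hx Y (J x Z)
    rw [hJ2 x hx.1, map_neg] at this
    linarith
  let f : V → ℂ := fun x => (α x a b : ℂ) - I * (α x (J x a) b : ℂ)
  let β : V → ℂ → V → V → ℝ := fun x c => om (s1 x) (s2 x) c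
  let K : V → ℂ → V → ℝ := fun x c X =>
    kk (β x c) (J x) (fun X Y => fderiv ℝ J x X Y) a b (s1 x X) (s2 x X)
  let q : V → ℂ → V → ℂ := fun x c X => (K x c X : ℂ) + I * (K x c (J x X) : ℂ) -
    I * (β x c (fderiv ℝ J x (J x X) a) b : ℂ) - (β x c (fderiv ℝ J x X a) b : ℂ)
  have hβ1 : ∀ x c c' Y Z, β x (c + c') Y Z = β x c Y Z + β x c' Y Z := by
    intro x c c' Y Z
    simp only [β, om, add_mul, add_re]
  have hβ2 : ∀ x (r : ℝ) c Y Z, β x (r • c) Y Z = r * β x c Y Z := by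
    intro x r c Y Z
    simp only [β, om, smul_mul_assoc, smul_re, smul_eq_mul]
  have hβ3 : ∀ x c Y Y' Z, β x c (Y + Y') Z = β x c Y Z + β x c Y' Z := by
    intro x c Y Y' Z
    simp only [β, om, map_add, ← add_re]
    congr 1
    ring
  have hβ4 : ∀ x (r : ℝ) c Y Z, β x c (r • Y) Z = r * β x c Y Z := by
    intro x r c Y Z
    simp only [β, om, map_smul, smul_mul_assoc, ← smul_sub, mul_smul_comm, smul_re, smul_eq_mul]
  have hK1 : ∀ x c c' X, K x (c + c') X = K x c X + K x c' X := by
    intro x c c' X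
    simp only [K, kk, hβ1]
    ring
  have hK2 : ∀ x (r : ℝ) c X, K x (r • c) X = r * K x c X := by
    intro x r c X
    simp only [K, kk, hβ2]
    ring
  have hK3 : ∀ x c X X', K x c (X + X') = K x c X + K x c X' := by
    intro x c X X'
    simp only [K, kk, map_add, add_re, add_im]
    ring
  have hK4 : ∀ x (r : ℝ) c X, K x c (r • X) = r * K x c X := by
    intro x r c X
    simp only [K, kk, map_smul, smul_re, smul_im, smul_eq_mul]
    ring
  have hβs : ∀ c {Y Z : V → V}, ContDiffOn ℝ ∞ Y U → ContDiffOn ℝ ∞ Z U →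
      ContDiffOn ℝ ∞ (fun x => β x c (Y x) (Z x)) U := fun c Y Z hY hZ =>
    om_smooth hs1 hs2 contDiffOn_const hY hZ
  have hc : ∀ v : V, ContDiffOn ℝ ∞ (fun _ : V => v) U := fun v => contDiffOn_const
  have hJc : ∀ v : V, ContDiffOn ℝ ∞ (fun x : V => J x v) U := fun v => hJ.clm_apply (hc v)
  have hDc : ∀ {Y : V → V} (v : V), ContDiffOn ℝ ∞ Y U →
      ContDiffOn ℝ ∞ (fun x => fderiv ℝ J x (Y x) v) U := fun v hY =>
    (hDJ.clm_apply hY).clm_apply (hc v)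
  have hre : ∀ {g : V → ℂ}, ContDiffOn ℝ ∞ g U → ContDiffOn ℝ ∞ (fun x => (g x).re) U :=
    fun hg => Complex.reCLM.contDiff.comp_contDiffOn hg
  have him : ∀ {g : V → ℂ}, ContDiffOn ℝ ∞ g U → ContDiffOn ℝ ∞ (fun x => (g x).im) U :=
    fun hg => Complex.imCLM.contDiff.comp_contDiffOn hg
  have hKs : ∀ c {X : V → V}, ContDiffOn ℝ ∞ X U → ContDiffOn ℝ ∞ (fun x => K x c (X x)) U := by
    intro c X hX
    have t1 := hs1.clm_apply hX
    have t2 := hs2.clm_apply hX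
    refine ((((hre t1).mul ?_).add ((him t1).mul ?_)).add ((hre t2).mul ?_)).add ((him t2).mul ?_)
    · exact hβs c (hDc a (hc b)) (hc a)
    · exact ((((hβs c (hDc a (hJc b)) (hc a)).neg.add (hβs c (hDc a (hc a)) (hJc b))).add
        (hβs c (hJc a) (hDc b (hc a)))).sub (hβs c (hc a) (hDc b (hJc a)))).add
        (hβs c (hDc a (hJc a)) (hc b))
    · exact ((hβs c (hDc b (hc a)) (hc b)).neg.add (hβs c (hDc a (hc b)) (hc b))).sub
        (hβs c (hc a) (hDc b (hc b)))
    · exact ((hβs c (hDc b (hJc a)) (hc b)).add (hβs c (hDc a (hc b)) (hJc b))).add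
        (hβs c (hJc a) (hDc b (hc b)))
  have hof : ∀ {g : V → ℝ}, ContDiffOn ℝ ∞ g U → ContDiffOn ℝ ∞ (fun x => (g x : ℂ)) U :=
    fun hg => Complex.ofRealCLM.contDiff.comp_contDiffOn hg
  obtain ⟨Q, hQs, hQ⟩ := exists_bilin (U := U) q
    (by
      intro x c c' X
      simp only [q, hK1, hβ1]
      push_cast
      ring)
    (by
      intro x r c X
      simp only [q, hK2, hβ2]
      rw [real_smul]
      push_cast
      ring)
    (by
      intro x c X X'
      simp only [q, map_add, _root_.add_apply, hK3, hβ3]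
      push_cast
      ring)
    (by
      intro x r c X
      simp only [q, map_smul, _root_.smul_apply, hK4, hβ4, real_smul]
      push_cast
      ring)
    (by
      intro c X
      exact (((hof (hKs c (hc X))).add (contDiffOn_const.mul (hof (hKs c (hJc X))))).sub
        (contDiffOn_const.mul (hof (hβs c (hDc a (hJc X)) (hc b))))).sub
        (hof (hβs c (hDc a (hc X)) (hc b))))
  have hom : ∀ x ∈ U \ {p}, ∀ Y Z, α x Y Z = β x (f x) Y Z := fun x hx Y Z =>
    alg_om (hJ2 x hx.1) (hα0 x hx) (hαs x hx) (hαJ x hx) (hαJ1 x hx) a b (s1 x) (s2 x)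
      (hs x hx.1) Y Z
  have hJ' : ContDiffOn ℝ ∞ J (U \ {p}) := hJ.mono Set.sdiff_subset
  have hfs : ContDiffOn ℝ ∞ f (U \ {p}) := by
    refine ContDiffOn.sub ?_ (contDiffOn_const.mul ?_)
    · exact Complex.ofRealCLM.contDiff.comp_contDiffOn
        ((hα.clm_apply contDiffOn_const).clm_apply contDiffOn_const)
    · exact Complex.ofRealCLM.contDiff.comp_contDiffOn
        ((hα.clm_apply (hJ'.clm_apply contDiffOn_const)).clm_apply contDiffOn_const)
  refine ⟨f, Q, hfs, hQs, fun x hx X => ?_, hom⟩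
  have hαd : HasFDerivAt α (fderiv ℝ α x) x :=
    ((hα.contDiffAt (hVo.mem_nhds hx)).differentiableAt (by simp)).hasFDerivAt
  have hJd : HasFDerivAt J (fderiv ℝ J x) x :=
    ((hJ.contDiffAt (hU.mem_nhds hx.1)).differentiableAt (by simp)).hasFDerivAt
  set D := fderiv ℝ α x with hDdef
  set δ := fderiv ℝ J x with hδdef
  have hk : ∀ v : V, HasFDerivAt (fun _ : V => v) (0 : V →L[ℝ] V) x := fun v => hasFDerivAt_const v x
  have hJk : ∀ v : V, HasFDerivAt (fun x => J x v) (δ.flip v) x := fun v => by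
    have := hJd.clm_apply (hk v)
    refine this.congr_fderiv (ContinuousLinearMap.ext fun X => ?_)
    simp
  have hgen : ∀ {Y Z : V → V} {Y' Z' : V →L[ℝ] V}, HasFDerivAt Y Y' x → HasFDerivAt Z Z' x →
      ∃ L : V →L[ℝ] ℝ, HasFDerivAt (fun x => α x (Y x) (Z x)) L x ∧
        ∀ X, L X = D X (Y x) (Z x) + α x (Y' X) (Z x) + α x (Y x) (Z' X) := by
    intro Y Z Y' Z' hY hZ
    refine ⟨_, (hαd.clm_apply hY).clm_apply hZ, fun X => ?_⟩
    simp
    ring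
  have hmem := hVo.mem_nhds hx
  have hD : ∀ X Y Z, D X Y Z = - D X Z Y := by
    intro X Y Z
    obtain ⟨L1, hL1, e1⟩ := hgen (hk Y) (hk Z)
    obtain ⟨L2, hL2, e2⟩ := hgen (hk Z) (hk Y)
    have : L1 = -L2 := hL1.unique (hL2.neg.congr_of_eventuallyEq (by
      filter_upwards [hmem] with y hy
      exact hαs y hy Y Z))
    have h := congrArg (fun T => T X) this
    simp [e1, e2] at h
    exact h
  have hi : ∀ X Y Z, D X (J x Y) Z + α x (δ X Y) Z = D X Y (J x Z) + α x Y (δ X Z) := by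
    intro X Y Z
    obtain ⟨L1, hL1, e1⟩ := hgen (hJk Y) (hk Z)
    obtain ⟨L2, hL2, e2⟩ := hgen (hk Y) (hJk Z)
    have : L1 = L2 := hL1.unique (hL2.congr_of_eventuallyEq (by
      filter_upwards [hmem] with y hy
      exact hαJ1 y hy Y Z))
    have h := congrArg (fun T => T X) this
    simp [e1, e2] at h
    exact h
  have hii : ∀ X Y Z, D X (J x Y) (J x Z) + α x (δ X Y) (J x Z) + α x (J x Y) (δ X Z) =
      - D X Y Z := by
    intro X Y Z
    obtain ⟨L1, hL1, e1⟩ := hgen (hJk Y) (hJk Z)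
    obtain ⟨L2, hL2, e2⟩ := hgen (hk Y) (hk Z)
    have : L1 = -L2 := hL1.unique (hL2.neg.congr_of_eventuallyEq (by
      filter_upwards [hmem] with y hy
      exact hαJ y hy Y Z))
    have h := congrArg (fun T => T X) this
    simp [e1, e2] at h
    exact h
  have hβα : β x (f x) = fun Y Z => α x Y Z := by
    funext Y Z
    exact (hom x hx Y Z).symm
  have hE : ∀ X, D (J x X) a b - D X (J x a) b = K x (f x) X := by
    intro X
    have := alg_E1 (hJ2 x hx.1) hD (hαs x hx) hi hii (hcl x hx) a b X (s1 x X) (s2 x X)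
      (hs x hx.1 X)
    rw [this]
    simp only [K, hβα]
    rfl
  -- derivative of f
  obtain ⟨L1, hL1, e1⟩ := hgen (hk a) (hk b)
  obtain ⟨L2, hL2, e2⟩ := hgen (hJk a) (hk b)
  have hfd : ∀ X, fderiv ℝ f x X = (L1 X : ℂ) - I * (L2 X : ℂ) := by
    intro X
    have h1 := (Complex.ofRealCLM.hasFDerivAt (x := α x a b)).comp x hL1
    have h2 := (Complex.ofRealCLM.hasFDerivAt (x := α x (J x a) b)).comp x hL2
    have h3 : HasFDerivAt f _ x := h1.sub (h2.const_mul I)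
    rw [h3.fderiv]
    simp
  rw [hfd, hfd, hQ]
  have E1 := hE X
  have E2 := hE (J x X)
  rw [hJ2 x hx.1, map_neg] at E2
  simp only [q, hβα, ← E1, ← E2, e1, e2]
  simp
  have hI : I * I = -1 := I_mul_I
  linear_combination ((D X (J x a) b : ℂ) + (α x (δ X a) b : ℂ)) * hI

end Equation
end HartogsAux

open Complex Metric
set_option linter.unusedSectionVars false

namespace HartogsAux
open MeasureTheory Filter Topology
open scoped ContDiff

set_option synthInstance.maxHeartbeats 400000
set_option maxSynthPendingDepth 4

section Conclusion

lemma inverse_smooth {E F G : Type} [NormedAddCommGroup E] [NormedSpace ℝ E]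
    [NormedAddCommGroup F] [NormedSpace ℝ F] [NormedAddCommGroup G] [NormedSpace ℝ G]
    [CompleteSpace F] {U : Set E} (hU : IsOpen U) {p : E} (hp : p ∈ U)
    {P : E → (F →L[ℝ] G)} (hP : ContDiffOn ℝ ∞ P U) (T : F ≃L[ℝ] G)
    (hT : P p = (T : F →L[ℝ] G)) :
    ∃ U1, IsOpen U1 ∧ U1 ⊆ U ∧ p ∈ U1 ∧ ∃ S : E → (G →L[ℝ] F), ContDiffOn ℝ ∞ S U1 ∧
      ∀ x ∈ U1, ∀ X, P x (S x X) = X := by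
  have hR : IsOpen (Set.range ((↑) : (F ≃L[ℝ] G) → (F →L[ℝ] G))) := ContinuousLinearEquiv.isOpen
  refine ⟨U ∩ P ⁻¹' (Set.range ((↑) : (F ≃L[ℝ] G) → (F →L[ℝ] G))),
    hP.continuousOn.isOpen_inter_preimage hU hR, Set.inter_subset_left, ⟨hp, T, hT.symm⟩,
    fun x => (P x).inverse, ?_, ?_⟩
  · rintro x ⟨hx, e, he⟩
    have h1 : ContDiffAt ℝ ∞ P x := hP.contDiffAt (hU.mem_nhds hx)
    have h2 : ContDiffAt ℝ ∞ (ContinuousLinearMap.inverse : (F →L[ℝ] G) → (G →L[ℝ] F)) (P x) := by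
      rw [← he]
      exact contDiffAt_map_inverse e
    exact (h2.comp x h1).contDiffWithinAt
  · rintro x ⟨hx, e, he⟩ X
    simp only [← he, ContinuousLinearMap.inverse_equiv]
    exact e.apply_symm_apply X

lemma exists_coframe {U : Set VV} (hU : IsOpen U) {p : VV} (hp : p ∈ U)
    {J : VV → (VV →L[ℝ] VV)} (hJ : ContDiffOn ℝ ∞ J U) (hJ2 : ∀ x ∈ U, ∀ X, J x (J x X) = -X) :
    ∃ U1, IsOpen U1 ∧ U1 ⊆ U ∧ p ∈ U1 ∧ ∃ (a b : VV) (s1 s2 : VV → (VV →L[ℝ] ℂ)),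
      ContDiffOn ℝ ∞ s1 U1 ∧ ContDiffOn ℝ ∞ s2 U1 ∧
      ∀ x ∈ U1, ∀ X, X = (s1 x X).re • a + (s1 x X).im • J x a + (s2 x X).re • b +
        (s2 x X).im • J x b := by
  obtain ⟨T, hT⟩ := exists_frame (hJ2 p hp)
  set a := T (1, 0) with ha
  set b := T (0, 1) with hb
  let P : VV → (VV →L[ℝ] VV) := fun x =>
    (Complex.reCLM.comp (ContinuousLinearMap.fst ℝ ℂ ℂ)).smulRight a +
    (Complex.imCLM.comp (ContinuousLinearMap.fst ℝ ℂ ℂ)).smulRight (J x a) +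
    (Complex.reCLM.comp (ContinuousLinearMap.snd ℝ ℂ ℂ)).smulRight b +
    (Complex.imCLM.comp (ContinuousLinearMap.snd ℝ ℂ ℂ)).smulRight (J x b)
  have hPa : ∀ x q, P x q = q.1.re • a + q.1.im • J x a + q.2.re • b + q.2.im • J x b :=
    fun x q => rfl
  have hPs : ContDiffOn ℝ ∞ P U := by
    rw [contDiffOn_clm_apply]
    intro q
    simp only [hPa]
    have h1 : ContDiffOn ℝ ∞ (fun x => J x a) U := hJ.clm_apply contDiffOn_const
    have h2 : ContDiffOn ℝ ∞ (fun x => J x b) U := hJ.clm_apply contDiffOn_const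
    exact ((contDiffOn_const.add (h1.const_smul q.1.im)).add contDiffOn_const).add
      (h2.const_smul q.2.im)
  have hPT : P p = (T : VV →L[ℝ] VV) := by
    refine ContinuousLinearMap.ext fun q => ?_
    rw [hPa, ha, hb, ← hT, ← hT, ← map_smul, ← map_smul, ← map_smul, ← map_smul, ← map_add,
      ← map_add, ← map_add]
    change T _ = T q
    congr 1
    refine Prod.ext ?_ ?_
    · apply Complex.ext <;> simp
    · apply Complex.ext <;> simp
  obtain ⟨U1, h1, h2, h3, S, hS, hPS⟩ := inverse_smooth hU hp hPs T hPT
  refine ⟨U1, h1, h2, h3, a, b, fun x => (ContinuousLinearMap.fst ℝ ℂ ℂ).comp (S x),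
    fun x => (ContinuousLinearMap.snd ℝ ℂ ℂ).comp (S x), ?_, ?_, fun x hx X => ?_⟩
  · exact contDiffOn_const.clm_comp hS
  · exact contDiffOn_const.clm_comp hS
  · exact (hPS x hx X).symm.trans (hPa x (S x X))

lemma zero_of_punctured {V E : Type} [NormedAddCommGroup V] [NormedSpace ℝ V] [Nontrivial V]
    [NormedAddCommGroup E] {g : V → E} {p : V} (hg : ContinuousAt g p)
    (h : ∀ᶠ x in 𝓝[≠] p, g x = 0) : g p = 0 := by
  have : (𝓝[≠] p).NeBot := Module.punctured_nhds_neBot ℝ V p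
  have h1 : Tendsto g (𝓝[≠] p) (𝓝 (g p)) := hg.mono_left nhdsWithin_le_nhds
  have h2 : Tendsto g (𝓝[≠] p) (𝓝 0) := tendsto_const_nhds.congr' (by
    filter_upwards [h] with x hx
    exact hx.symm)
  exact tendsto_nhds_unique h1 h2

/-- Once a smooth extension exists, it is a closed anti-invariant form. -/
lemma finish {V : Type} [NormedAddCommGroup V] [NormedSpace ℝ V] [Nontrivial V]
    {U : Set V} (hU : IsOpen U) {p : V} {J : V → (V →L[ℝ] V)}
    (hJ : ContDiffOn ℝ ∞ J U) {α : V → (V →L[ℝ] V →L[ℝ] ℝ)}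
    (hα : ContDiffOn ℝ ∞ α U)
    (hα0 : ∀ x ∈ U \ {p}, ∀ X, α x X X = 0)
    (hαJ : ∀ x ∈ U \ {p}, ∀ X Y, α x (J x X) (J x Y) = - α x X Y)
    (hcl : ∀ x ∈ U \ {p}, ∀ X Y Z,
      fderiv ℝ α x X Y Z - fderiv ℝ α x Y X Z + fderiv ℝ α x Z X Y = 0) :
    (∀ x ∈ U, ∀ X, α x X X = 0) ∧ (∀ x ∈ U, ∀ X Y, α x (J x X) (J x Y) = - α x X Y) ∧
    (∀ x ∈ U, ∀ X Y Z,
      fderiv ℝ α x X Y Z - fderiv ℝ α x Y X Z + fderiv ℝ α x Z X Y = 0) := by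
  have hDα : ContDiffOn ℝ ∞ (fderiv ℝ α) U := hα.fderiv_of_isOpen hU (by simp)
  have gen : ∀ {g : V → ℝ}, ContinuousOn g U → (∀ x ∈ U \ {p}, g x = 0) → ∀ x ∈ U, g x = 0 := by
    intro g hg h x hx
    by_cases hxp : x = p
    · subst hxp
      refine zero_of_punctured (hg.continuousAt (hU.mem_nhds hx)) ?_
      filter_upwards [nhdsWithin_le_nhds (hU.mem_nhds hx), self_mem_nhdsWithin] with y h1 h2
      exact h y ⟨h1, h2⟩
    · exact h x ⟨hx, hxp⟩
  have c1 := hα.continuousOn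
  have c2 := hDα.continuousOn
  have c3 := hJ.continuousOn
  have k : ∀ v : V, ContinuousOn (fun _ : V => v) U := fun v => continuousOn_const
  refine ⟨fun x hx X => ?_, fun x hx X Y => ?_, fun x hx X Y Z => ?_⟩
  · exact gen (g := fun x => α x X X) ((c1.clm_apply (k X)).clm_apply (k X))
      (fun x hx => hα0 x hx X) x hx
  · have := gen (g := fun x => α x (J x X) (J x Y) + α x X Y)
      (((c1.clm_apply (c3.clm_apply (k X))).clm_apply (c3.clm_apply (k Y))).add
        ((c1.clm_apply (k X)).clm_apply (k Y)))
      (fun x hx => by rw [hαJ x hx]; ring) x hx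
    linarith
  · exact gen (g := fun x => fderiv ℝ α x X Y Z - fderiv ℝ α x Y X Z + fderiv ℝ α x Z X Y)
      ((((((c2.clm_apply (k X)).clm_apply (k Y)).clm_apply (k Z))).sub
        ((((c2.clm_apply (k Y)).clm_apply (k X)).clm_apply (k Z)))).add
        ((((c2.clm_apply (k Z)).clm_apply (k X)).clm_apply (k Y))))
      (fun x hx => hcl x hx X Y Z) x hx

lemma glue {V : Type} [NormedAddCommGroup V] [NormedSpace ℝ V] [FiniteDimensional ℝ V]
    [DecidableEq V] {U U1 : Set V} (hU : IsOpen U) (hU1 : IsOpen U1) {p : V} (hp1 : p ∈ U1)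
    {α : V → (V →L[ℝ] V →L[ℝ] ℝ)} (hα : ContDiffOn ℝ ∞ α (U \ {p}))
    {s1 s2 : V → (V →L[ℝ] ℂ)} (hs1 : ContDiffOn ℝ ∞ s1 U1) (hs2 : ContDiffOn ℝ ∞ s2 U1)
    {f : V → ℂ} (hf : ContDiffOn ℝ ∞ f (U1 \ {p}))
    (hom : ∀ x ∈ U1 \ {p}, ∀ Y Z, α x Y Z = om (s1 x) (s2 x) (f x) Y Z)
    {c : ℂ} (hc : ContDiffAt ℝ ∞ (Function.update f p c) p) :
    ∃ αt : V → (V →L[ℝ] V →L[ℝ] ℝ), ContDiffOn ℝ ∞ αt U ∧ ∀ x, x ≠ p → αt x = α x := by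
  have hVo : IsOpen (U \ {p}) := hU.sdiff isClosed_singleton
  have hV1o : IsOpen (U1 \ {p}) := hU1.sdiff isClosed_singleton
  set g := Function.update f p c with hgdef
  have hg : ContDiffOn ℝ ∞ g U1 := by
    intro x hx
    by_cases hxp : x = p
    · subst hxp
      exact hc.contDiffWithinAt
    · have h1 : ContDiffAt ℝ ∞ f x := hf.contDiffAt (hV1o.mem_nhds ⟨hx, hxp⟩)
      refine (h1.congr_of_eventuallyEq ?_).contDiffWithinAt
      filter_upwards [isOpen_compl_singleton.mem_nhds hxp] with y hy
      exact Function.update_of_ne hy _ _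
  obtain ⟨B, hBs, hB⟩ := exists_bilin (U := U1) (fun x Y Z => om (s1 x) (s2 x) (g x) Y Z)
    (by
      intro x Y Y' Z
      simp only [om, map_add, ← add_re]
      congr 1
      ring)
    (by
      intro x r Y Z
      simp only [om, map_smul, smul_mul_assoc, mul_smul_comm, ← smul_sub, smul_re])
    (by
      intro x Y Z Z'
      simp only [om, map_add, ← add_re]
      congr 1
      ring)
    (by
      intro x r Y Z
      simp only [om, map_smul, smul_mul_assoc, mul_smul_comm, ← smul_sub, smul_re])
    (fun Y Z => om_smooth hs1 hs2 hg contDiffOn_const contDiffOn_const)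
  have hBα : ∀ x ∈ U1, x ≠ p → B x = α x := by
    intro x hx hxp
    refine ContinuousLinearMap.ext fun Y => ContinuousLinearMap.ext fun Z => ?_
    rw [hB, hom x ⟨hx, hxp⟩, hgdef, Function.update_of_ne hxp]
  refine ⟨Function.update α p (B p), ?_, fun x hx => Function.update_of_ne hx _ _⟩
  intro x hx
  by_cases hxp : x = p
  · subst hxp
    have h1 : ContDiffAt ℝ ∞ B x := hBs.contDiffAt (hU1.mem_nhds hp1)
    refine (h1.congr_of_eventuallyEq ?_).contDiffWithinAt
    filter_upwards [hU1.mem_nhds hp1] with y hy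
    by_cases hyp : y = x
    · subst hyp
      exact Function.update_self _ _ _
    · rw [Function.update_of_ne hyp, hBα y hy hyp]
  · have h1 : ContDiffAt ℝ ∞ α x := hα.contDiffAt (hVo.mem_nhds ⟨hx, hxp⟩)
    refine (h1.congr_of_eventuallyEq ?_).contDiffWithinAt
    filter_upwards [isOpen_compl_singleton.mem_nhds hxp] with y hy
    exact Function.update_of_ne hy _ _

open Classical in
lemma main {U : Set VV} (hU : IsOpen U) {p : VV} (hp : p ∈ U) {J : VV → (VV →L[ℝ] VV)}
    (hJ : ContDiffOn ℝ ∞ J U) (hJ2 : ∀ x ∈ U, ∀ X, J x (J x X) = -X)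
    {α : VV → (VV →L[ℝ] VV →L[ℝ] ℝ)} (hα : ContDiffOn ℝ ∞ α (U \ {p}))
    (hα0 : ∀ x ∈ U \ {p}, ∀ X, α x X X = 0)
    (hαJ : ∀ x ∈ U \ {p}, ∀ X Y, α x (J x X) (J x Y) = - α x X Y)
    (hcl : ∀ x ∈ U \ {p}, ∀ X Y Z,
      fderiv ℝ α x X Y Z - fderiv ℝ α x Y X Z + fderiv ℝ α x Z X Y = 0) :
    ∃ αt : VV → (VV →L[ℝ] VV →L[ℝ] ℝ), ContDiffOn ℝ ∞ αt U ∧ (∀ x, x ≠ p → αt x = α x) ∧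
    (∀ x ∈ U, ∀ X, αt x X X = 0) ∧ (∀ x ∈ U, ∀ X Y, αt x (J x X) (J x Y) = - αt x X Y) ∧
    (∀ x ∈ U, ∀ X Y Z,
      fderiv ℝ αt x X Y Z - fderiv ℝ αt x Y X Z + fderiv ℝ αt x Z X Y = 0) := by
  obtain ⟨U1, hU1, hsub, hp1, a, b, s1, s2, hs1, hs2, hs⟩ := exists_coframe hU hp hJ hJ2
  have hsub' : U1 \ {p} ⊆ U \ {p} := fun x hx => ⟨hsub hx.1, hx.2⟩
  obtain ⟨f, Q, hf, hQ, heq, hom⟩ := equation hU1 (hJ.mono hsub) (fun x hx => hJ2 x (hsub hx))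
    (hα.mono hsub') (fun x hx => hα0 x (hsub' hx)) (fun x hx => hαJ x (hsub' hx))
    (fun x hx => hcl x (hsub' hx)) hs1 hs2 hs
  obtain ⟨c, hc⟩ := ext_smooth hU1 hp1 (hJ.mono hsub) (fun x hx => hJ2 x (hsub hx)) f Q hf hQ heq
  obtain ⟨αt, ht, hte⟩ := glue hU hU1 hp1 hα hs1 hs2 hf hom hc
  refine ⟨αt, ht, hte, finish (p := p) hU hJ ht ?_ ?_ ?_⟩
  · intro x hx X
    rw [hte x hx.2]
    exact hα0 x hx X
  · intro x hx X Y
    rw [hte x hx.2]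
    exact hαJ x hx X Y
  · intro x hx X Y Z
    have : αt =ᶠ[𝓝 x] α := by
      filter_upwards [isOpen_compl_singleton.mem_nhds hx.2] with y hy
      exact hte y hy
    rw [this.fderiv_eq]
    exact hcl x hx X Y Z

end Conclusion
end HartogsAux

/-- local form of Proposition 5.2 of the paper: Hartogs-type extension
of closed `J`-anti-invariant 2-forms across a point. -/
theorem hartogs_extension_anti_invariant_form
    (U : Set (ℂ × ℂ)) (hU : IsOpen U) (p : ℂ × ℂ) (hp : p ∈ U)
    (J : ℂ × ℂ → (ℂ × ℂ →L[ℝ] ℂ × ℂ)) (hJ : IsAlmostComplexOn J U)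
    (α : ℂ × ℂ → (ℂ × ℂ →L[ℝ] ℂ × ℂ →L[ℝ] ℝ))
    (hα : IsTwoFormOn α (U \ {p}))
    (hαJ : IsJAntiInvariantOn J α (U \ {p}))
    (hαcl : IsClosedTwoFormOn α (U \ {p})) :
    ∃ αt : ℂ × ℂ → (ℂ × ℂ →L[ℝ] ℂ × ℂ →L[ℝ] ℝ),
      IsTwoFormOn αt U ∧ IsJAntiInvariantOn J αt U ∧ IsClosedTwoFormOn αt U ∧
      ∀ x ∈ U \ {p}, αt x = α x := by
  obtain ⟨αt, h1, h2, h3, h4, h5⟩ :=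
    HartogsAux.main hU hp hJ.1 hJ.2 hα.1 hα.2 hαJ hαcl
  exact ⟨αt, ⟨h1, h3⟩, h4, h5, fun x hx => h2 x hx.2⟩
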